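/- For every real λ with 0 < λ < 0.312, the state ρ̃(λ) on ℂ⁸⊗ℂ⁸ satisfies: (a) SN(ρ̃(λ)) = 3; (b) ρ̃(λ) is Bell-nonlocal under projective measurements: there exist Hermitian operators A₀, A₁ on ℂ⁸ and B₀, B₁ on ℂ⁸, each of the form P − Q with P, Q orthogonal projections satisfying PQ = 0, such that Tr[ρ̃(λ)(A₀⊗B₀ + A₀⊗B₁ + A₁⊗B₀ − A₁⊗B₁)] > 2; (c) nevertheless, for all finite families of projective measurements {M_{a|x}}_{a} on ℂ⁸ (x ∈ X finite) and {N_{b|y}}_{b} on ℂ⁸ (y ∈ Y finite), there exist a finite set Λ, weights q_μ ≥ 0 with Σ_μ q_μ = 1, and conditional probability distributions P(a|x,μ) and Q(b|y,μ), such that for all a, b, x, y: Tr[(M_{a|x} ⊗ N_{b|y}) ρ̃(λ)] = λ Σ_μ q_μ P(a|x,μ) Q(b|y,μ) + (1−λ) ⟨φ₂⁺| (M_{a|x} ⊗ N_{b|y}) |φ₂⁺⟩; hence every such correlation can be simulated using shared randomness together with the Schmidt-rank-2 state |φ₂⁺⟩, so no Bell-nonlocal game restricted to projective measurements can certify that SN(ρ̃(λ))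 > 2. -/

import Mathlib

open Matrix
open scoped Kronecker ComplexOrder

/-- The Schmidt rank of a bipartite vector `ψ : m × n → ℂ`, i.e. the rank of the
matrix `C_ψ` with `(C_ψ)_{ij} = ψ (i, j)`. -/
noncomputable def schmidtRank {m n : Type*} [Fintype m] [Fintype n] (ψ : m × n → ℂ) : ℕ :=
  (Matrix.of fun i j => ψ (i, j)).rank

/-- A matrix `ρ` indexed by `m × n` has Schmidt number at most `r` if it can be written
as `∑_k ψ_k ψ_k†` with each `ψ_k` of Schmidt rank at most `r`. -/
def SchmidtNumberLE {m n : Type*} [Fintype m] [Fintype n]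
    (ρ : Matrix (m × n) (m × n) ℂ) (r : ℕ) : Prop :=
  ∃ (k : ℕ) (ψ : Fin k → m × n → ℂ),
    (∀ i, schmidtRank (ψ i) ≤ r) ∧
    ρ = ∑ i, Matrix.vecMulVec (ψ i) (star (ψ i))

/-- The Schmidt number: the least `r` such that `SchmidtNumberLE ρ r`. -/
noncomputable def schmidtNumber {m n : Type*} [Fintype m] [Fintype n]
    (ρ : Matrix (m × n) (m × n) ℂ) : ℕ :=
  sInf {r | SchmidtNumberLE ρ r}

/-- A density matrix: positive semidefinite with unit trace. -/
def IsDensityMatrix {n : Type*} [Fintype n] (ρ : Matrix n n ℂ) : Prop :=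
  ρ.PosSemidef ∧ ρ.trace = 1

/-- An effect: a Hermitian matrix `M` with `0 ≤ M ≤ I`. -/
def IsEffect {n : Type*} [Fintype n] [DecidableEq n] (M : Matrix n n ℂ) : Prop :=
  M.PosSemidef ∧ (1 - M).PosSemidef

/-- The maximally entangled unit vector `|Φ⁺_d⟩ = (1/√d) ∑ᵢ e_{(i,i)}`. -/
noncomputable def maxEnt (d : ℕ) : Fin d × Fin d → ℂ :=
  fun p => if p.1 = p.2 then ((1 / Real.sqrt d : ℝ) : ℂ) else 0

/-- The projector `P_d = |Φ⁺_d⟩⟨Φ⁺_d|`. -/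
noncomputable def projME (d : ℕ) : Matrix (Fin d × Fin d) (Fin d × Fin d) ℂ :=
  Matrix.vecMulVec (maxEnt d) (star (maxEnt d))

/-- The isotropic state `ρ^iso_d(p) = p P_d + (1−p) I/d²`. -/
noncomputable def isoState (d : ℕ) (p : ℝ) : Matrix (Fin d × Fin d) (Fin d × Fin d) ℂ :=
  (p : ℂ) • projME d + (((1 - p) / (d ^ 2 : ℝ) : ℝ) : ℂ) • 1

/-- `|φ₂⁺⟩ = (1/√2)(e_{(0,0)} + e_{(1,1)}) ∈ ℂ⁸⊗ℂ⁸`. -/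
noncomputable def phi2 : Fin 8 × Fin 8 → ℂ :=
  fun q => if q = (0, 0) ∨ q = (1, 1) then ((1 / Real.sqrt 2 : ℝ) : ℂ) else 0

/-- `ρ̃(λ) = λ ρ^iso₈(0.24) + (1−λ)|φ₂⁺⟩⟨φ₂⁺|`. -/
noncomputable def rhoTilde (l : ℝ) : Matrix (Fin 8 × Fin 8) (Fin 8 × Fin 8) ℂ :=
  (l : ℂ) • isoState 8 0.24 + ((1 - l : ℝ) : ℂ) • Matrix.vecMulVec phi2 (star phi2)

/-- A projective measurement: a finite family of orthogonal projections, mutually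
orthogonal, summing to the identity. -/
def IsProjMeasurement {n : Type*} [Fintype n] [DecidableEq n] {A : Type*} [Fintype A]
    (M : A → Matrix n n ℂ) : Prop :=
  (∀ a, (M a)ᴴ = M a) ∧ (∀ a, M a * M a = M a) ∧
    (∀ a a', a ≠ a' → M a * M a' = 0) ∧ ∑ a, M a = 1

/-- A ±1-valued projective observable: `A = P − Q` with `P, Q` orthogonal projections
and `PQ = 0`. -/
def IsPMObservable {n : Type*} [Fintype n] (A : Matrix n n ℂ) : Prop :=
  ∃ P Q : Matrix n n ℂ,
    Pᴴ = P ∧ P * P = P ∧ Qᴴ = Q ∧ Q * Q = Q ∧ P * Q = 0 ∧ A = P - Q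

/-!
*Schmidt number.* Since `|tr C|² ≤ rank C · tr (C† C)`, a state of Schmidt number at most `r` has
fidelity at most `r / 8` with `Φ⁺₈`, while `ρ̃(λ)` has fidelity `1/4 + 3λ/1600`. Conversely, let `C`
be the `8 × 8` Gram matrix of the unit vectors `(1, ω, ω³)/√3`, with `ω` running over the eighth
roots of unity: it has rank three, unit diagonal and `|C_{ij}|² ≤ 1/3` off the diagonal. Averaging
`|C⟩⟨C|` over conjugations of `C` by diagonal matrices of cube roots of unity keeps
`∑ᵢⱼ |ii⟩⟨jj|` and turns the rest into a diagonal, so adding product states gives `ρ^iso₈(0.24)`.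

*Nonlocality.* The optimal CHSH settings of `φ₂⁺`, extended to reflections of `ℂ⁸`, still violate
the inequality after the isotropic noise is admixed.

*Simulation.* The hidden variable is a complex Gaussian vector `z` with law reweighted by `‖z‖²/d`.
Bob answers by the Born rule for the conjugate of `z`, Alice outputs the index of the largest
coordinate of `z` in her measurement basis. The squared moduli of the coordinates are independent
unit exponentials, whose maximum has mean the harmonic number `H_d`. Hence this model reproduces the
isotropic state at visibility `(H_d - 1)/(d - 1)`, which for `d = 8` is `481/1960 > 0.24`.
-/

section SchmidtCone

variable {m n : Type*} [Fintype m] [Fintype n]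

lemma schmidtRank_vec (C : Matrix m n ℂ) : schmidtRank (vec C) = C.rank :=
  C.rank_transpose

namespace SchmidtNumberLE

variable {ρ σ : Matrix (m × n) (m × n) ℂ} {r : ℕ}

lemma of_vecMulVec {ψ : m × n → ℂ} (hψ : schmidtRank ψ ≤ r) :
    SchmidtNumberLE (vecMulVec ψ (star ψ)) r :=
  ⟨1, fun _ => ψ, fun _ => hψ, by simp⟩

lemma of_vec {C : Matrix m n ℂ} (hC : C.rank ≤ r) :
    SchmidtNumberLE (vecMulVec (vec C) (star (vec C))) r :=
  of_vecMulVec ((schmidtRank_vec C).trans_le hC)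

lemma exists_vec (h : SchmidtNumberLE ρ r) :
    ∃ (k : ℕ) (C : Fin k → Matrix n m ℂ), (∀ i, (C i).rank ≤ r) ∧
      ρ = ∑ i, vecMulVec (vec (C i)) (star (vec (C i))) := by
  obtain ⟨k, ψ, hrank, rfl⟩ := h
  refine ⟨k, fun i => of fun b a => ψ i (a, b), fun i => ?_, rfl⟩
  exact (schmidtRank_vec _).symm.trans_le (hrank i)

lemma mono {s : ℕ} (h : SchmidtNumberLE ρ r) (hrs : r ≤ s) : SchmidtNumberLE ρ s :=
  let ⟨k, ψ, hrank, hρ⟩ := h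
  ⟨k, ψ, fun i => (hrank i).trans hrs, hρ⟩

lemma add (hρ : SchmidtNumberLE ρ r) (hσ : SchmidtNumberLE σ r) : SchmidtNumberLE (ρ + σ) r := by
  obtain ⟨k, ψ, hψ, rfl⟩ := hρ
  obtain ⟨k', ψ', hψ', rfl⟩ := hσ
  refine ⟨k + k', Fin.append ψ ψ', fun i => ?_, by simp [Fin.sum_univ_add]⟩
  refine Fin.addCases (fun i => ?_) (fun i => ?_) i
  · simpa using hψ i
  · simpa using hψ' i

lemma sum {ι : Type*} {s : Finset ι} {ρ : ι → Matrix (m × n) (m × n) ℂ}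
    (h : ∀ i ∈ s, SchmidtNumberLE (ρ i) r) : SchmidtNumberLE (∑ i ∈ s, ρ i) r :=
  Finset.sum_induction ρ (SchmidtNumberLE · r) (fun _ _ => add)
    ⟨0, Fin.elim0, fun i => i.elim0, by simp⟩ h

lemma smul {c : ℝ} (hc : 0 ≤ c) (h : SchmidtNumberLE ρ r) : SchmidtNumberLE ((c : ℂ) • ρ) r := by
  obtain ⟨k, C, hC, rfl⟩ := h.exists_vec
  rw [Finset.smul_sum]
  refine sum fun i _ => ?_
  have hsqrt : (√c : ℂ) * √c = c := mod_cast Real.mul_self_sqrt hc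
  have hvec : (c : ℂ) • vecMulVec (vec (C i)) (star (vec (C i))) =
      vecMulVec (vec ((√c : ℂ) • C i)) (star (vec ((√c : ℂ) • C i))) := by
    simp only [vec_smul, star_smul, smul_vecMulVec, vecMulVec_smul, smul_smul, RCLike.star_def,
      Complex.conj_ofReal, hsqrt]
  rw [hvec]
  refine of_vec (le_trans ?_ (hC i))
  classical
  rw [smul_eq_diagonal_mul]
  exact rank_mul_le_right _ _

lemma diagonal [DecidableEq m] [DecidableEq n] {v : m × n → ℝ} (hv : ∀ i, 0 ≤ v i) :
    SchmidtNumberLE (Matrix.diagonal fun i => (v i : ℂ)) 1 := by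
  have hsum : (Matrix.diagonal fun i => (v i : ℂ)) = ∑ i : m × n, (v i : ℂ) •
      vecMulVec (vec (single i.2 i.1 (1 : ℂ))) (star (vec (single i.2 i.1 (1 : ℂ)))) := by
    simp [vec_single, ← sum_single_eq_diagonal, ← single_eq_single_vecMulVec_single]
  rw [hsum]
  refine sum fun i _ => smul (hv i) (of_vec ?_)
  rw [single_eq_single_vecMulVec_single]
  exact rank_vecMulVec_le _ _

end SchmidtNumberLE

end SchmidtCone

section Fidelity

variable {m n : Type*} [Fintype m] [Fintype n]

lemma trace_conjTranspose_mul_self_re (A : Matrix m n ℂ) :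
    (Aᴴ * A).trace.re = ∑ i, ∑ j, ‖A i j‖ ^ 2 := by
  rw [← star_vec_dotProduct_vec]
  simp [dotProduct, Fintype.sum_prod_type_right, Complex.conj_mul', ← Complex.ofReal_pow]

lemma norm_trace_mul_sq_le (A : Matrix m n ℂ) (B : Matrix n m ℂ) :
    ‖(A * B).trace‖ ^ 2 ≤ (Aᴴ * A).trace.re * (Bᴴ * B).trace.re := by
  have hnorm : ‖(A * B).trace‖ ≤ ∑ p : m × n, ‖A p.1 p.2‖ * ‖B p.2 p.1‖ := by
    simp only [trace, diag, mul_apply, ← Fintype.sum_prod_type', ← norm_mul]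
    exact norm_sum_le _ _
  calc ‖(A * B).trace‖ ^ 2 ≤ (∑ p : m × n, ‖A p.1 p.2‖ * ‖B p.2 p.1‖) ^ 2 := by gcongr
    _ ≤ _ := Finset.sum_mul_sq_le_sq_mul_sq _ _ _
    _ = _ := by
      rw [Fintype.sum_prod_type, Fintype.sum_prod_type_right, trace_conjTranspose_mul_self_re,
        trace_conjTranspose_mul_self_re]

lemma exists_isometry_onto_range (C : Matrix m n ℂ) :
    ∃ V : Matrix m (Fin C.rank) ℂ, Vᴴ * V = 1 ∧ V * (Vᴴ * C) = C := by
  classical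
  let T := Matrix.toEuclideanLin C
  have hr : Module.finrank ℂ (LinearMap.range T) = C.rank := by
    rw [rank_eq_finrank_range_toLin C (EuclideanSpace.basisFun m ℂ).toBasis
      (EuclideanSpace.basisFun n ℂ).toBasis, ← toEuclideanLin_eq_toLin_orthonormal]
  let b := (stdOrthonormalBasis ℂ (LinearMap.range T)).reindex (finCongr hr)
  let col (j : n) : LinearMap.range T := ⟨T (EuclideanSpace.single j 1), by simp⟩
  have hrepr (j : n) (k : Fin C.rank) :
      ((of fun i k => (b k).1 i)ᴴ * C) k j = b.repr (col j) k := by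
    simp [b.repr_apply_apply, T, col, mul_apply, PiLp.inner_apply, mul_comm, toLpLin_apply]
  refine ⟨of fun i k => (b k).1 i, ?_, ?_⟩
  · ext k l
    rw [one_apply, ← b.inner_eq_ite k l, Submodule.coe_inner]
    simp [mul_apply, PiLp.inner_apply, mul_comm]
  · ext i j
    have hcol : ∑ k, b.repr (col j) k * (b k).1 i = C i j := by
      simpa [T, col, toLpLin_apply] using congr(($(b.sum_repr (col j))).1.ofLp i)
    rw [mul_apply, ← hcol]
    exact Finset.sum_congr rfl fun k _ => by rw [hrepr, of_apply, mul_comm]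

lemma norm_trace_sq_le_rank_mul (C : Matrix n n ℂ) :
    ‖C.trace‖ ^ 2 ≤ C.rank * (Cᴴ * C).trace.re := by
  obtain ⟨V, hV, hVC⟩ := exists_isometry_onto_range C
  calc ‖C.trace‖ ^ 2 = ‖(V * (Vᴴ * C)).trace‖ ^ 2 := by rw [hVC]
    _ ≤ (Vᴴ * V).trace.re * ((Vᴴ * C)ᴴ * (Vᴴ * C)).trace.re := norm_trace_mul_sq_le _ _
    _ = C.rank * (Cᴴ * C).trace.re := by
      rw [hV, conjTranspose_mul, conjTranspose_conjTranspose, Matrix.mul_assoc, hVC]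
      simp

end Fidelity

/-- The fidelity `⟨Φ⁺_d|ρ|Φ⁺_d⟩` of `ρ` with the maximally entangled state, whose size bounds the
Schmidt number from below. -/
noncomputable def maxEntFidelity {d : ℕ} (ρ : Matrix (Fin d × Fin d) (Fin d × Fin d) ℂ) : ℂ :=
  star (maxEnt d) ⬝ᵥ ρ *ᵥ maxEnt d

lemma one_div_sqrt_mul_self {x : ℝ} (hx : 0 ≤ x) :
    ((1 / √x : ℝ) : ℂ) * ((1 / √x : ℝ) : ℂ) = ((1 / x : ℝ) : ℂ) := by
  rw [← Complex.ofReal_mul, div_mul_div_comm, Real.mul_self_sqrt hx, one_mul]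

lemma maxEnt_eq_vec (d : ℕ) :
    maxEnt d = vec (((1 / √d : ℝ) : ℂ) • (1 : Matrix (Fin d) (Fin d) ℂ)) := by
  ext ⟨i, j⟩
  simp [maxEnt, one_apply, eq_comm (a := i)]

lemma star_maxEnt_dotProduct_vec {d : ℕ} (C : Matrix (Fin d) (Fin d) ℂ) :
    star (maxEnt d) ⬝ᵥ vec C = ((1 / √d : ℝ) : ℂ) * C.trace := by
  simp [maxEnt_eq_vec, star_vec_dotProduct_vec]

lemma star_dotProduct_vecMulVec_mulVec {n : Type*} [Fintype n] (φ ψ : n → ℂ) :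
    star φ ⬝ᵥ vecMulVec ψ (star ψ) *ᵥ φ = (‖star φ ⬝ᵥ ψ‖ ^ 2 : ℝ) := by
  rw [vecMulVec_mulVec, dotProduct_smul, star_dotProduct ψ]
  simp [← Complex.mul_conj']

lemma SchmidtNumberLE.mul_maxEntFidelity_le {d r : ℕ}
    {ρ : Matrix (Fin d × Fin d) (Fin d × Fin d) ℂ} (h : SchmidtNumberLE ρ r) :
    d * (maxEntFidelity ρ).re ≤ r * ρ.trace.re := by
  obtain ⟨k, C, hC, rfl⟩ := h.exists_vec
  simp only [maxEntFidelity, sum_mulVec, dotProduct_sum, trace_sum, Complex.re_sum, Finset.mul_sum]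
  refine Finset.sum_le_sum fun i _ => ?_
  rw [star_dotProduct_vecMulVec_mulVec, star_maxEnt_dotProduct_vec, trace_vecMulVec,
    dotProduct_comm, star_vec_dotProduct_vec, Complex.ofReal_re]
  have hd : (d : ℝ) * (1 / √d) ^ 2 ≤ 1 := by
    simpa [← div_eq_mul_inv] using div_self_le_one (d : ℝ)
  calc (d : ℝ) * ‖((1 / √d : ℝ) : ℂ) * (C i).trace‖ ^ 2
      = d * (1 / √d) ^ 2 * ‖(C i).trace‖ ^ 2 := by simp [mul_pow, mul_assoc]
    _ ≤ ‖(C i).trace‖ ^ 2 := mul_le_of_le_one_left (by positivity) hd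
    _ ≤ (C i).rank * ((C i)ᴴ * C i).trace.re := norm_trace_sq_le_rank_mul _
    _ ≤ r * ((C i)ᴴ * C i).trace.re := by
      rw [trace_conjTranspose_mul_self_re]
      gcongr
      exact hC i

section PhaseTwirl

variable {n : Type*} [DecidableEq n]

lemma single_add_single_sub_eq_zero_iff (i j k l : n) :
    (Pi.single j 1 + Pi.single k 1 - Pi.single i 1 - Pi.single l 1 : n → ZMod 3) = 0 ↔
      (i = j ∧ k = l) ∨ (i = k ∧ j = l) := by
  refine ⟨fun h => ?_, ?_⟩
  · have hi := congrFun h i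
    have hl := congrFun h l
    simp only [Pi.sub_apply, Pi.add_apply, Pi.single_apply, Pi.zero_apply] at hi hl
    grind
  · rintro (⟨rfl, rfl⟩ | ⟨rfl, rfl⟩) <;> abel

variable [Fintype n]

lemma sum_stdAddChar_dotProduct {N : ℕ} [NeZero N] (c : n → ZMod N) :
    ∑ g : n → ZMod N, ZMod.stdAddChar (c ⬝ᵥ g) = if c = 0 then (N : ℂ) ^ Fintype.card n else 0 := by
  let χ : AddChar (n → ZMod N) ℂ :=
    ZMod.stdAddChar.compAddMonoidHom (dotProductBilin ℤ ℤ c).toAddMonoidHom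
  have hχ : χ = 0 ↔ c = 0 := by
    refine ⟨fun h => funext fun i => ?_, fun h => by ext g; simp [χ, h]⟩
    have hi : χ (Pi.single i 1) = 1 := by simp [h]
    apply ZMod.injective_stdAddChar
    simpa [χ] using hi
  have := AddChar.sum_eq_ite χ
  simpa [hχ, χ, ZMod.card] using this

/-- The diagonal unitary whose phases are the cube roots of unity with exponents `g`. -/
noncomputable def phaseUnitary (g : n → ZMod 3) : Matrix n n ℂ :=
  diagonal fun i => ZMod.stdAddChar (g i)

lemma sum_vecMulVec_phaseUnitary_conj_apply (C : Matrix n n ℂ) (i j k l : n) :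
    (∑ g, vecMulVec (vec (phaseUnitary g * C * (phaseUnitary g)ᴴ))
      (star (vec (phaseUnitary g * C * (phaseUnitary g)ᴴ)))) (i, j) (k, l) =
      C j i * star (C l k) *
        if (i = j ∧ k = l) ∨ (i = k ∧ j = l) then 3 ^ Fintype.card n else 0 := by
  have hphase (g : n → ZMod 3) :
      ZMod.stdAddChar ((Pi.single j 1 + Pi.single k 1 - Pi.single i 1 - Pi.single l 1) ⬝ᵥ g) =
        ZMod.stdAddChar (g j) * ZMod.stdAddChar (g k) * star (ZMod.stdAddChar (g i) : ℂ) *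
          star (ZMod.stdAddChar (g l) : ℂ) := by
    simp [add_dotProduct, sub_eq_add_neg, AddChar.map_add_eq_mul,
      AddChar.map_neg_eq_conj]
  have hsum := sum_stdAddChar_dotProduct (N := 3)
    (Pi.single j 1 + Pi.single k 1 - Pi.single i 1 - Pi.single l 1 : n → ZMod 3)
  simp only [single_add_single_sub_eq_zero_iff, hphase] at hsum
  rw [Nat.cast_ofNat] at hsum
  rw [← hsum, Finset.mul_sum, Matrix.sum_apply]
  refine Finset.sum_congr rfl fun g _ => ?_
  simp only [phaseUnitary, vecMulVec_apply, vec, Pi.star_apply, diagonal_conjTranspose,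
    mul_diagonal, diagonal_mul, star_mul', star_star]
  ring

lemma schmidtNumberLE_vec_one_add_diagonal {C : Matrix n n ℂ} (hC : ∀ i, C i i = 1) :
    SchmidtNumberLE (vecMulVec (vec (1 : Matrix n n ℂ)) (star (vec 1)) +
      diagonal fun p => ((if p.1 = p.2 then 0 else ‖C p.2 p.1‖ ^ 2 : ℝ) : ℂ)) C.rank := by
  have havg : vecMulVec (vec (1 : Matrix n n ℂ)) (star (vec 1)) +
      (diagonal fun p => ((if p.1 = p.2 then 0 else ‖C p.2 p.1‖ ^ 2 : ℝ) : ℂ)) =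
      ((((3 : ℝ) ^ Fintype.card n)⁻¹ : ℝ) : ℂ) •
        ∑ g, vecMulVec (vec (phaseUnitary g * C * (phaseUnitary g)ᴴ))
          (star (vec (phaseUnitary g * C * (phaseUnitary g)ᴴ))) := by
    ext ⟨i, j⟩ ⟨k, l⟩
    rw [Matrix.smul_apply, sum_vecMulVec_phaseUnitary_conj_apply]
    by_cases hdiag : i = j ∧ k = l
    · obtain ⟨rfl, rfl⟩ := hdiag
      simp [hC, vecMulVec_apply, diagonal_apply]
    by_cases hoff : i = k ∧ j = l
    · obtain ⟨rfl, rfl⟩ := hoff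
      have hij : i ≠ j := by grind
      simp only [Matrix.add_apply, vecMulVec_apply, vec, ne_eq, hij.symm, not_false_eq_true,
        one_apply_ne, Pi.star_apply, star_zero, mul_zero, diagonal_apply_eq, hij, ↓reduceIte,
        Complex.ofReal_pow, zero_add, Complex.ofReal_inv, Complex.ofReal_ofNat, RCLike.star_def,
        Complex.mul_conj', and_self, or_true, smul_eq_mul]
      field_simp
    · have hne : ¬ (l = k ∧ j = i) := by grind
      simp [hdiag, hoff, hne, vecMulVec_apply, one_apply, ← ite_and]
  rw [havg]
  refine .smul (by positivity) (.sum fun g _ => .of_vec ?_)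
  exact (rank_mul_le_left _ _).trans (rank_mul_le_right _ _)

lemma projME_eq_smul (d : ℕ) :
    projME d =
      ((1 / d : ℝ) : ℂ) • vecMulVec (vec (1 : Matrix (Fin d) (Fin d) ℂ)) (star (vec 1)) := by
  rw [projME, maxEnt_eq_vec, vec_smul, star_smul, smul_vecMulVec, vecMulVec_smul, smul_smul,
    RCLike.star_def, Complex.conj_ofReal, one_div_sqrt_mul_self d.cast_nonneg]

lemma schmidtNumberLE_isoState {d r : ℕ} {p : ℝ} (hp₀ : 0 ≤ p) (hp₁ : p ≤ 1)
    {C : Matrix (Fin d) (Fin d) ℂ} (hdiag : ∀ i, C i i = 1)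
    (hoff : ∀ i j, i ≠ j → d * p * ‖C i j‖ ^ 2 ≤ 1 - p) (hr : 1 ≤ r) (hrank : C.rank ≤ r) :
    SchmidtNumberLE (isoState d p) r := by
  have hsplit : isoState d p =
      ((p / d : ℝ) : ℂ) • (vecMulVec (vec (1 : Matrix (Fin d) (Fin d) ℂ)) (star (vec 1)) +
        diagonal fun q => ((if q.1 = q.2 then 0 else ‖C q.2 q.1‖ ^ 2 : ℝ) : ℂ)) +
      diagonal fun q => (((1 - p) / d ^ 2 -
        p / d * if q.1 = q.2 then 0 else ‖C q.2 q.1‖ ^ 2 : ℝ) : ℂ) := by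
    rw [isoState, projME_eq_smul, smul_smul, smul_add, add_assoc]
    congr 1
    · push_cast
      ring_nf
    · ext q q'
      by_cases hq : q = q'
      · simp only [hq, Matrix.add_apply, Matrix.smul_apply, one_apply_eq, diagonal_apply_eq]
        push_cast [smul_eq_mul]
        ring
      · simp [hq]
  rw [hsplit]
  refine .add (.smul (by positivity) ((schmidtNumberLE_vec_one_add_diagonal hdiag).mono hrank))
    (.mono (.diagonal fun q => ?_) hr)
  have hd : 0 < (d : ℝ) := mod_cast q.1.pos
  split_ifs with hq
  · have := sub_nonneg.2 hp₁
    rw [mul_zero, sub_zero]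
    positivity
  · rw [sub_nonneg, le_div_iff₀ (by positivity)]
    calc p / d * ‖C q.2 q.1‖ ^ 2 * d ^ 2 = d * p * ‖C q.2 q.1‖ ^ 2 := by field_simp
      _ ≤ 1 - p := hoff _ _ (Ne.symm hq)

end PhaseTwirl

section ThreeRoots

lemma norm_one_add_add_pow_three_sq_le {w : ℂ} (hw : w ^ 8 = 1) (hw₁ : w ≠ 1) :
    ‖1 + w + w ^ 3‖ ^ 2 ≤ 3 := by
  have hnorm : ‖w‖ = 1 := Complex.norm_eq_one_of_pow_eq_one hw (by norm_num)
  have hinv : w * star w = 1 := by simpa [hnorm] using Complex.mul_conj' w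
  have hexpand : ((‖1 + w + w ^ 3‖ ^ 2 : ℝ) : ℂ) = (1 + w + w ^ 3) * (1 + star w + star w ^ 3) := by
    push_cast
    rw [← Complex.mul_conj']
    simp
  have hfactor : (w ^ 4 - 1) * (w ^ 4 + 1) = 0 := by linear_combination hw
  obtain h | h := mul_eq_zero.mp hfactor
  · have hgeom : 1 + w + w ^ 2 + w ^ 3 = 0 := by
      apply mul_left_cancel₀ (sub_ne_zero.mpr hw₁)
      linear_combination h
    have hstar : star w = w ^ 3 := by linear_combination (-star w) * h + w ^ 3 * hinv
    have hone : ((‖1 + w + w ^ 3‖ ^ 2 : ℝ) : ℂ) = 1 := by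
      rw [hexpand, hstar]
      linear_combination (2 - w ^ 2 + w ^ 3) * hgeom + 2 * h + (1 + w + w ^ 3) * w * hw
    rw [show ‖1 + w + w ^ 3‖ ^ 2 = 1 from mod_cast hone]
    norm_num
  · have hstar : star w = - w ^ 3 := by linear_combination (star w) * h - w ^ 3 * hinv
    have hthree : ((‖1 + w + w ^ 3‖ ^ 2 : ℝ) : ℂ) = 3 := by
      rw [hexpand, hstar]
      linear_combination -(1 + w + w ^ 3) * w * hw - (2 + w ^ 2) * h
    exact le_of_eq (mod_cast hthree)

lemma exists_rank_le_three_norm_sq_le_third :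
    ∃ C : Matrix (Fin 8) (Fin 8) ℂ,
      C.rank ≤ 3 ∧ (∀ i, C i i = 1) ∧ ∀ i j, i ≠ j → ‖C i j‖ ^ 2 ≤ 1 / 3 := by
  obtain ⟨ζ, hζ⟩ : ∃ ζ : ℂ, IsPrimitiveRoot ζ 8 := ⟨_, Complex.isPrimitiveRoot_exp 8 (by norm_num)⟩
  have hζ_star : ζ * star ζ = 1 := by
    simpa [hζ.norm'_eq_one (by norm_num)] using Complex.mul_conj' ζ
  let V : Matrix (Fin 8) (Fin 3) ℂ := of fun i k => (ζ ^ (i : ℕ)) ^ (![0, 1, 3] k)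
  have hgram (i j : Fin 8) : ((3 : ℂ)⁻¹ • (V * Vᴴ)) i j =
      3⁻¹ * (1 + ζ ^ (i : ℕ) * star ζ ^ (j : ℕ) + (ζ ^ (i : ℕ) * star ζ ^ (j : ℕ)) ^ 3) := by
    simp [V, mul_apply, Fin.sum_univ_three, mul_pow]
  have hphase_one (i : Fin 8) : ζ ^ (i : ℕ) * star ζ ^ (i : ℕ) = 1 := by
    rw [← mul_pow, hζ_star, one_pow]
  refine ⟨(3 : ℂ)⁻¹ • (V * Vᴴ), ?_, fun i => ?_, fun i j hij => ?_⟩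
  · rw [← Matrix.smul_mul]
    exact (rank_mul_le_left _ _).trans ((rank_le_card_width _).trans_eq (Fintype.card_fin 3))
  · rw [hgram, hphase_one]
    norm_num
  · have hpow : (ζ ^ (i : ℕ) * star ζ ^ (j : ℕ)) ^ 8 = 1 := by
      rw [mul_pow, ← pow_mul', ← pow_mul', pow_mul, pow_mul, ← star_pow, hζ.pow_eq_one]
      simp
    have hne : ζ ^ (i : ℕ) * star ζ ^ (j : ℕ) ≠ 1 := fun h => hij <| Fin.ext <|
      hζ.pow_inj i.2 j.2 (by linear_combination ζ ^ (j : ℕ) * h - ζ ^ (i : ℕ) * hphase_one j)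
    have hbound := norm_one_add_add_pow_three_sq_le hpow hne
    rw [hgram, norm_mul, mul_pow]
    norm_num at hbound ⊢
    linarith

end ThreeRoots

section State

lemma trace_mul_vecMulVec_star {n : Type*} [Fintype n] (A : Matrix n n ℂ) (ψ : n → ℂ) :
    (A * vecMulVec ψ (star ψ)).trace = star ψ ⬝ᵥ A *ᵥ ψ := by
  rw [mul_vecMulVec, trace_vecMulVec, dotProduct_comm]

lemma star_vec_dotProduct_kronecker_mulVec_vec {m n : Type*} [Fintype m] [Fintype n]
    (A : Matrix n n ℂ) (B : Matrix m m ℂ) (C : Matrix m n ℂ) :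
    star (vec C) ⬝ᵥ (A ⊗ₖ B) *ᵥ vec C = (Cᴴ * B * C * Aᵀ).trace := by
  rw [kronecker_mulVec_vec, star_vec_dotProduct_vec]
  simp only [Matrix.mul_assoc]

/-- The projection of `ℂ⁸` onto the span of the first two basis vectors; up to normalisation it is
the coefficient matrix of `phi2`. -/
def qubitProj : Matrix (Fin 8) (Fin 8) ℂ :=
  diagonal fun i => if i < 2 then 1 else 0

lemma conjTranspose_qubitProj : qubitProjᴴ = qubitProj := by
  simp [qubitProj]

lemma qubitProj_mul_self : qubitProj * qubitProj = qubitProj := by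
  simp [qubitProj]

lemma trace_qubitProj : qubitProj.trace = 2 := by
  have hcard : ({i | i < 2} : Finset (Fin 8)).card = 2 := by decide
  rw [qubitProj, trace_diagonal, Finset.sum_boole, hcard, Nat.cast_ofNat]

lemma rank_qubitProj_le : qubitProj.rank ≤ 2 := by
  rw [qubitProj, rank_diagonal, Fintype.card_subtype]
  refine Finset.card_le_card (t := {0, 1}) fun i => ?_
  fin_cases i <;> simp

lemma phi2_eq_vec : phi2 = vec (((1 / √2 : ℝ) : ℂ) • qubitProj) := by
  ext ⟨i, j⟩
  fin_cases i <;> fin_cases j <;> simp [phi2, qubitProj]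

lemma schmidtRank_phi2_le : schmidtRank phi2 ≤ 2 := by
  rw [phi2_eq_vec, schmidtRank_vec, smul_eq_diagonal_mul]
  exact (rank_mul_le_right _ _).trans rank_qubitProj_le

lemma star_phi2_dotProduct_kronecker_mulVec_phi2 (A B : Matrix (Fin 8) (Fin 8) ℂ) :
    star phi2 ⬝ᵥ (A ⊗ₖ B) *ᵥ phi2 = 1 / 2 * (qubitProj * B * qubitProj * Aᵀ).trace := by
  rw [phi2_eq_vec, star_vec_dotProduct_kronecker_mulVec_vec, conjTranspose_smul,
    conjTranspose_qubitProj, RCLike.star_def, Complex.conj_ofReal, Matrix.mul_smul,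
    Matrix.smul_mul, Matrix.smul_mul, Matrix.smul_mul, Matrix.smul_mul, smul_smul,
    one_div_sqrt_mul_self zero_le_two, trace_smul, smul_eq_mul]
  norm_num

lemma star_phi2_dotProduct_phi2 : star phi2 ⬝ᵥ phi2 = 1 := by
  have h := star_phi2_dotProduct_kronecker_mulVec_phi2 1 1
  rw [one_kronecker_one, one_mulVec] at h
  rw [h, transpose_one, Matrix.mul_one, Matrix.mul_one, qubitProj_mul_self, trace_qubitProj]
  norm_num

lemma star_maxEnt_dotProduct_maxEnt {d : ℕ} (hd : 0 < d) : star (maxEnt d) ⬝ᵥ maxEnt d = 1 := by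
  conv_lhs => enter [2]; rw [maxEnt_eq_vec]
  rw [star_maxEnt_dotProduct_vec, trace_smul, smul_eq_mul, ← mul_assoc,
    one_div_sqrt_mul_self d.cast_nonneg]
  have : (d : ℂ) ≠ 0 := by simp [hd.ne']
  simp [this]

lemma trace_isoState {d : ℕ} (hd : 0 < d) (p : ℝ) : (isoState d p).trace = 1 := by
  rw [isoState, trace_add, trace_smul, trace_smul, projME, trace_vecMulVec, dotProduct_comm,
    star_maxEnt_dotProduct_maxEnt hd, trace_one]
  have : (d : ℂ) ≠ 0 := by simp [hd.ne']
  simp only [smul_eq_mul, mul_one, Fintype.card_prod, Fintype.card_fin]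
  push_cast
  field_simp
  ring

lemma trace_rhoTilde (l : ℝ) : (rhoTilde l).trace = 1 := by
  rw [rhoTilde, trace_add, trace_smul, trace_smul, trace_isoState (by norm_num), trace_vecMulVec,
    dotProduct_comm, star_phi2_dotProduct_phi2]
  simp

lemma maxEntFidelity_isoState {d : ℕ} (hd : 0 < d) (p : ℝ) :
    maxEntFidelity (isoState d p) = ((p + (1 - p) / d ^ 2 : ℝ) : ℂ) := by
  simp [maxEntFidelity, isoState, add_mulVec, smul_mulVec, projME,
    star_dotProduct_vecMulVec_mulVec, star_maxEnt_dotProduct_maxEnt hd]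

lemma norm_star_maxEnt_dotProduct_phi2_sq : ‖star (maxEnt 8) ⬝ᵥ phi2‖ ^ 2 = 1 / 4 := by
  rw [phi2_eq_vec, star_maxEnt_dotProduct_vec, trace_smul, trace_qubitProj, smul_eq_mul, norm_mul,
    norm_mul, mul_pow, mul_pow, Complex.norm_real, Complex.norm_real, Real.norm_eq_abs,
    Real.norm_eq_abs, sq_abs, sq_abs, div_pow, div_pow, Real.sq_sqrt (by positivity),
    Real.sq_sqrt (by positivity)]
  norm_num

lemma maxEntFidelity_rhoTilde (l : ℝ) :
    maxEntFidelity (rhoTilde l) = ((1 / 4 + 3 / 1600 * l : ℝ) : ℂ) := by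
  have hsplit : maxEntFidelity (rhoTilde l) = l * maxEntFidelity (isoState 8 0.24) +
      ((1 - l : ℝ) : ℂ) * (star (maxEnt 8) ⬝ᵥ vecMulVec phi2 (star phi2) *ᵥ maxEnt 8) := by
    simp [maxEntFidelity, rhoTilde, add_mulVec, smul_mulVec]
  rw [hsplit, maxEntFidelity_isoState (by norm_num), star_dotProduct_vecMulVec_mulVec,
    norm_star_maxEnt_dotProduct_phi2_sq]
  norm_cast
  norm_num
  ring

lemma three_le_of_schmidtNumberLE_rhoTilde {l : ℝ} (hl : 0 < l) {r : ℕ}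
    (h : SchmidtNumberLE (rhoTilde l) r) : 3 ≤ r := by
  have hfid := h.mul_maxEntFidelity_le
  rw [maxEntFidelity_rhoTilde, trace_rhoTilde, Complex.ofReal_re, Complex.one_re] at hfid
  push_cast at hfid
  have : (2 : ℝ) < r := by linarith
  exact_mod_cast this

lemma schmidtNumberLE_isoState_eight : SchmidtNumberLE (isoState 8 0.24) 3 := by
  obtain ⟨C, hrank, hdiag, hoff⟩ := exists_rank_le_three_norm_sq_le_third
  refine schmidtNumberLE_isoState (by norm_num) (by norm_num) hdiag (fun i j hij => ?_)
    (by norm_num) hrank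
  have := hoff i j hij
  norm_num
  linarith

theorem schmidtNumber_rhoTilde {l : ℝ} (hl₀ : 0 < l) (hl₁ : l ≤ 1) :
    schmidtNumber (rhoTilde l) = 3 := by
  have hphi2 : SchmidtNumberLE (vecMulVec phi2 (star phi2)) 3 :=
    .of_vecMulVec (schmidtRank_phi2_le.trans (by norm_num))
  have hle : SchmidtNumberLE (rhoTilde l) 3 :=
    .add (.smul hl₀.le schmidtNumberLE_isoState_eight) (.smul (sub_nonneg.2 hl₁) hphi2)
  exact le_antisymm (Nat.sInf_le hle)
    (le_csInf ⟨3, hle⟩ fun r => three_le_of_schmidtNumberLE_rhoTilde hl₀)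

end State

section Correlations

lemma trace_kronecker_mul_isoState {d : ℕ} (p : ℝ) (A B : Matrix (Fin d) (Fin d) ℂ) :
    ((A ⊗ₖ B) * isoState d p).trace =
      ((p / d : ℝ) : ℂ) * (B * Aᵀ).trace +
        (((1 - p) / d ^ 2 : ℝ) : ℂ) * (A.trace * B.trace) := by
  rw [isoState, projME_eq_smul, smul_smul, Matrix.mul_add, Matrix.mul_smul, Matrix.mul_smul,
    trace_add, trace_smul, trace_smul, trace_mul_vecMulVec_star,
    star_vec_dotProduct_kronecker_mulVec_vec, smul_eq_mul, smul_eq_mul, ← Complex.ofReal_mul,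
    mul_one_div, conjTranspose_one, Matrix.one_mul, Matrix.mul_one, Matrix.mul_one, trace_kronecker]

lemma trace_mul_rhoTilde (l : ℝ) (K : Matrix (Fin 8 × Fin 8) (Fin 8 × Fin 8) ℂ) :
    (K * rhoTilde l).trace = l * (K * isoState 8 0.24).trace +
      ((1 - l : ℝ) : ℂ) * (star phi2 ⬝ᵥ K *ᵥ phi2) := by
  rw [rhoTilde, Matrix.mul_add, Matrix.mul_smul, Matrix.mul_smul, trace_add, trace_smul, trace_smul,
    trace_mul_vecMulVec_star, smul_eq_mul, smul_eq_mul]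

end Correlations

section CHSH

variable {n : Type*} [DecidableEq n]

/-- The Householder reflection `1 - 2|v⟩⟨v|`, a two-outcome observable when `v` is a unit vector. -/
def reflectionMatrix (v : n → ℂ) : Matrix n n ℂ :=
  1 - (2 : ℂ) • vecMulVec v (star v)

lemma transpose_reflectionMatrix (v : n → ℂ) :
    (reflectionMatrix v)ᵀ = reflectionMatrix (star v) := by
  simp [reflectionMatrix, transpose_vecMulVec]

variable [Fintype n]

lemma trace_reflectionMatrix {v : n → ℂ} (hv : star v ⬝ᵥ v = 1) :
    (reflectionMatrix v).trace = Fintype.card n - 2 := by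
  simp [reflectionMatrix, trace_vecMulVec, dotProduct_comm v, hv]

lemma isPMObservable_reflectionMatrix {v : n → ℂ} (hv : star v ⬝ᵥ v = 1) :
    IsPMObservable (reflectionMatrix v) := by
  have hQ : (vecMulVec v (star v))ᴴ = vecMulVec v (star v) := by simp [conjTranspose_vecMulVec]
  have hQQ : vecMulVec v (star v) * vecMulVec v (star v) = vecMulVec v (star v) := by
    simp [vecMulVec_mul_vecMulVec, hv]
  refine ⟨1 - vecMulVec v (star v), vecMulVec v (star v), ?_, ?_, hQ, hQQ, ?_, ?_⟩
  · rw [conjTranspose_sub, conjTranspose_one, hQ]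
  · exact IsIdempotentElem.one_sub hQQ
  · rw [sub_mul, hQQ, Matrix.one_mul, sub_self]
  · rw [reflectionMatrix, two_smul, sub_sub]

lemma trace_proj_mul_reflectionMatrix_mul_reflectionMatrix {E : Matrix n n ℂ}
    (hE : Eᴴ = E) (hEE : E * E = E) {u v : n → ℂ} (hu : star u ⬝ᵥ u = 1) (hv : star v ⬝ᵥ v = 1)
    (hEu : E *ᵥ u = u) (hEv : E *ᵥ v = v) :
    (E * reflectionMatrix v * E * reflectionMatrix u).trace =
      E.trace - 4 + 4 * ((star v ⬝ᵥ u) * (star u ⬝ᵥ v)) := by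
  have hvE : star v ᵥ* E = star v := by
    rw [← hE, ← star_mulVec, hEv]
  have hcompress : E * reflectionMatrix v * E = E - (2 : ℂ) • vecMulVec v (star v) := by
    simp [reflectionMatrix, Matrix.mul_sub, Matrix.sub_mul, mul_vecMulVec, vecMulVec_mul, hEE, hEv,
      hvE]
  rw [hcompress, reflectionMatrix, Matrix.mul_sub, Matrix.mul_one, Matrix.mul_smul, trace_sub,
    trace_sub, trace_smul, trace_smul, trace_mul_vecMulVec_star, trace_vecMulVec, dotProduct_comm v,
    hv, sub_mulVec, hEu, smul_mulVec, vecMulVec_mulVec, dotProduct_sub, dotProduct_smul,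
    dotProduct_smul, hu]
  simp only [smul_eq_mul, MulOpposite.smul_eq_mul_unop, MulOpposite.unop_op]
  ring

/-- The real unit vector at angle `θ` in the plane spanned by the first two basis vectors, which
supports both marginals of `phi2`. -/
noncomputable def planeVec (θ : ℝ) : Fin 8 → ℂ :=
  Pi.single 0 (Real.cos θ : ℂ) + Pi.single 1 (Real.sin θ : ℂ)

lemma star_planeVec (θ : ℝ) : star (planeVec θ) = planeVec θ := by
  simp [planeVec, ← Complex.cos_conj, ← Complex.sin_conj]

lemma planeVec_dotProduct_planeVec (θ φ : ℝ) :
    planeVec θ ⬝ᵥ planeVec φ = (Real.cos (θ - φ) : ℂ) := by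
  simp [planeVec, Real.cos_sub]

lemma star_planeVec_dotProduct_self (θ : ℝ) : star (planeVec θ) ⬝ᵥ planeVec θ = 1 := by
  simp [star_planeVec, planeVec_dotProduct_planeVec]

lemma qubitProj_mulVec_planeVec (θ : ℝ) : qubitProj *ᵥ planeVec θ = planeVec θ := by
  simp [qubitProj, planeVec, mulVec_add, ← Pi.single_smul]

lemma trace_proj_mul_reflectionMatrix_planeVec {E : Matrix (Fin 8) (Fin 8) ℂ} (hE : Eᴴ = E)
    (hEE : E * E = E) (hEv : ∀ θ, E *ᵥ planeVec θ = planeVec θ) (θ φ : ℝ) :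
    (E * reflectionMatrix (planeVec φ) * E * (reflectionMatrix (planeVec θ))ᵀ).trace =
      E.trace - 2 + 2 * (Real.cos (2 * (θ - φ)) : ℂ) := by
  rw [transpose_reflectionMatrix, star_planeVec,
    trace_proj_mul_reflectionMatrix_mul_reflectionMatrix hE hEE (star_planeVec_dotProduct_self θ)
      (star_planeVec_dotProduct_self φ) (hEv θ) (hEv φ), star_planeVec, star_planeVec,
    planeVec_dotProduct_planeVec, planeVec_dotProduct_planeVec, ← neg_sub θ φ, Real.cos_neg,
    Real.cos_two_mul]
  push_cast
  ring

lemma trace_rhoTilde_mul_reflectionMatrix_planeVec (l θ φ : ℝ) :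
    (rhoTilde l * reflectionMatrix (planeVec θ) ⊗ₖ reflectionMatrix (planeVec φ)).trace =
      ((l * (0.06 * Real.cos (2 * (θ - φ)) + 0.6075) +
        (1 - l) * Real.cos (2 * (θ - φ)) : ℝ) : ℂ) := by
  have hiso := trace_proj_mul_reflectionMatrix_planeVec (E := 1) (by simp) (by simp) (by simp) θ φ
  rw [Matrix.one_mul, Matrix.mul_one, trace_one, Fintype.card_fin] at hiso
  rw [trace_mul_comm, trace_mul_rhoTilde, trace_kronecker_mul_isoState, hiso,
    star_phi2_dotProduct_kronecker_mulVec_phi2,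
    trace_proj_mul_reflectionMatrix_planeVec conjTranspose_qubitProj qubitProj_mul_self
      qubitProj_mulVec_planeVec, trace_qubitProj,
    trace_reflectionMatrix (star_planeVec_dotProduct_self θ),
    trace_reflectionMatrix (star_planeVec_dotProduct_self φ), Fintype.card_fin]
  push_cast
  ring

theorem exists_chsh_violation_rhoTilde {l : ℝ} (hl : l < 0.57) :
    ∃ A₀ A₁ B₀ B₁ : Matrix (Fin 8) (Fin 8) ℂ,
      IsPMObservable A₀ ∧ IsPMObservable A₁ ∧ IsPMObservable B₀ ∧ IsPMObservable B₁ ∧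
      (2 : ℂ) < (rhoTilde l * (A₀ ⊗ₖ B₀ + A₀ ⊗ₖ B₁ + A₁ ⊗ₖ B₀ - A₁ ⊗ₖ B₁)).trace := by
  have hobs (θ : ℝ) : IsPMObservable (reflectionMatrix (planeVec θ)) :=
    isPMObservable_reflectionMatrix (star_planeVec_dotProduct_self θ)
  have hcos : Real.cos (3 * (Real.pi / 4)) = -(√2 / 2) := by
    rw [← Real.cos_pi_div_four, ← Real.cos_pi_sub]
    ring_nf
  have hangle₁ : 2 * (0 - Real.pi / 8) = -(Real.pi / 4) := by ring
  have hangle₂ : 2 * (0 - -(Real.pi / 8)) = Real.pi / 4 := by ring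
  have hangle₃ : 2 * (Real.pi / 4 - Real.pi / 8) = Real.pi / 4 := by ring
  have hangle₄ : 2 * (Real.pi / 4 - -(Real.pi / 8)) = 3 * (Real.pi / 4) := by ring
  refine ⟨_, _, _, _, hobs 0, hobs (Real.pi / 4), hobs (Real.pi / 8), hobs (-(Real.pi / 8)), ?_⟩
  simp only [Matrix.mul_add, Matrix.mul_sub, trace_add, trace_sub,
    trace_rhoTilde_mul_reflectionMatrix_planeVec, hangle₁, hangle₂, hangle₃, hangle₄, Real.cos_neg,
    hcos, Real.cos_pi_div_four, ← Complex.ofReal_add, ← Complex.ofReal_sub]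
  rw [← Complex.ofReal_ofNat, Complex.real_lt_real]
  have hsqrt : (1.414 : ℝ) < √2 := Real.lt_sqrt_of_sq_lt (by norm_num)
  nlinarith

end CHSH

section ComplexGaussian

open MeasureTheory Set Filter Topology
open scoped ENNReal

/-- The density `π⁻¹ exp (-|z|²)` of the standard complex Gaussian distribution, normalised so that
`|z|²` has mean one. -/
noncomputable def complexGaussianPDF (z : ℂ) : ℝ := Real.pi⁻¹ * Real.exp (-‖z‖ ^ 2)

/-- The standard complex Gaussian distribution on `ℂ`. -/
noncomputable def complexGaussian : Measure ℂ :=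
  volume.withDensity fun z => ENNReal.ofReal (complexGaussianPDF z)

lemma complexGaussianPDF_nonneg (z : ℂ) : 0 ≤ complexGaussianPDF z := by
  unfold complexGaussianPDF; positivity

@[fun_prop]
lemma continuous_complexGaussianPDF : Continuous complexGaussianPDF := by
  unfold complexGaussianPDF; fun_prop

lemma integral_complexGaussian (f : ℂ → ℝ) :
    ∫ z, f z ∂complexGaussian = ∫ z, complexGaussianPDF z * f z := by
  rw [complexGaussian, integral_withDensity_eq_integral_toReal_smul (by fun_prop) (by simp)]
  simp only [ENNReal.toReal_ofReal (complexGaussianPDF_nonneg _), smul_eq_mul]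

lemma integral_norm_rpow_complexGaussian {q : ℝ} (hq : -2 < q) :
    ∫ z, ‖z‖ ^ q ∂complexGaussian = Real.Gamma ((q + 2) / 2) := by
  have h := Complex.integral_rpow_mul_exp_neg_rpow one_le_two hq
  simp only [Real.rpow_two] at h
  have hswap (z : ℂ) : complexGaussianPDF z * ‖z‖ ^ q =
      Real.pi⁻¹ * (‖z‖ ^ q * Real.exp (-‖z‖ ^ 2)) := by
    rw [complexGaussianPDF]; ring
  simp only [integral_complexGaussian, hswap, integral_const_mul, h]
  field_simp

lemma integral_complexGaussianPDF : ∫ z, complexGaussianPDF z = 1 := by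
  have h := integral_norm_rpow_complexGaussian (q := 0) (by norm_num)
  simp only [integral_complexGaussian, Real.rpow_zero, mul_one] at h
  rw [h, zero_add, div_self two_ne_zero, Real.Gamma_one]

lemma integral_norm_sq_complexGaussian : ∫ z, ‖z‖ ^ 2 ∂complexGaussian = 1 := by
  have h := integral_norm_rpow_complexGaussian (q := 2) (by norm_num)
  norm_num at h
  exact h

lemma integrable_complexGaussianPDF : Integrable complexGaussianPDF :=
  .of_integral_ne_zero (by rw [integral_complexGaussianPDF]; exact one_ne_zero)

instance : IsProbabilityMeasure complexGaussian where
  measure_univ := by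
    rw [complexGaussian, withDensity_apply _ .univ, Measure.restrict_univ,
      ← ofReal_integral_eq_lintegral_ofReal integrable_complexGaussianPDF
        (.of_forall complexGaussianPDF_nonneg), integral_complexGaussianPDF, ENNReal.ofReal_one]

lemma complexGaussian_real_closedBall {r : ℝ} (hr : 0 ≤ r) :
    complexGaussian.real (Metric.closedBall 0 r) = 1 - Real.exp (-r ^ 2) := by
  have hderiv (y : ℝ) : HasDerivAt (fun y => -Real.exp (-y ^ 2) / 2) (y * Real.exp (-y ^ 2)) y := by
    refine ((hasDerivAt_pow 2 y).fun_neg.exp.fun_neg.div_const 2).congr_deriv ?_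
    push_cast
    ring
  have hradial : ∫ y in Ioi (0 : ℝ),
      y ^ (2 - 1) • (Iic r).indicator (fun y => Real.exp (-y ^ 2)) y =
        (1 - Real.exp (-r ^ 2)) / 2 := by
    calc _ = ∫ y in Ioi (0 : ℝ), (Iic r).indicator (fun y => y * Real.exp (-y ^ 2)) y := by
          simp [indicator]
      _ = ∫ y in (0 : ℝ)..r, y * Real.exp (-y ^ 2) := by
          rw [setIntegral_indicator measurableSet_Iic, Ioi_inter_Iic,
            intervalIntegral.integral_of_le hr]
      _ = (1 - Real.exp (-r ^ 2)) / 2 := by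
          rw [intervalIntegral.integral_eq_sub_of_hasDerivAt (fun y _ => hderiv y)
            (Continuous.intervalIntegrable (by fun_prop) _ _)]
          rw [zero_pow two_ne_zero, neg_zero, Real.exp_zero]
          ring
  have hball (z : ℂ) : complexGaussianPDF z * (Metric.closedBall 0 r).indicator 1 z =
      Real.pi⁻¹ * (Iic r).indicator (fun y => Real.exp (-y ^ 2)) ‖z‖ := by
    simp [indicator, complexGaussianPDF]
  have hvol : (volume : Measure ℂ).real (Metric.ball 0 1) = Real.pi := by
    simp [Measure.real, Complex.volume_ball]
  rw [← integral_indicator_one Metric.isClosed_closedBall.measurableSet, integral_complexGaussian]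
  simp only [hball]
  rw [integral_const_mul, integral_fun_norm_addHaar, Complex.finrank_real_complex, hvol, hradial]
  simp only [smul_eq_mul, nsmul_eq_mul, Nat.cast_ofNat]
  field_simp

variable (ι : Type*) [Fintype ι]

/-- The law of a random vector with independent standard complex Gaussian coordinates. -/
noncomputable def complexGaussianPi : Measure (ι → ℂ) := Measure.pi fun _ => complexGaussian

instance : IsProbabilityMeasure (complexGaussianPi ι) := by
  unfold complexGaussianPi; infer_instance

variable {ι}

lemma complexGaussianPi_eq_withDensity : complexGaussianPi ι = volume.withDensity fun z =>
    ENNReal.ofReal (Real.pi⁻¹ ^ Fintype.card ι * Real.exp (-∑ i, ‖z i‖ ^ 2)) := by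
  have hprod (z : ι → ℂ) : Real.pi⁻¹ ^ Fintype.card ι * Real.exp (-∑ i, ‖z i‖ ^ 2) =
      ∏ i, complexGaussianPDF (z i) := by
    simp [complexGaussianPDF, Finset.prod_mul_distrib, ← Real.exp_sum]
  simp only [hprod]
  rw [complexGaussianPi]
  refine Measure.pi_eq fun s hs => ?_
  have hint (i : ι) := integrable_complexGaussianPDF.restrict (s := s i)
  have hbox (i : ι) : complexGaussian (s i) =
      ENNReal.ofReal (∫ z in s i, complexGaussianPDF z) := by
    rw [complexGaussian, withDensity_apply _ (hs i), ofReal_integral_eq_lintegral_ofReal (hint i)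
      (.of_forall complexGaussianPDF_nonneg)]
  rw [withDensity_apply _ (.univ_pi hs), volume_pi, Measure.restrict_pi_pi,
    ← ofReal_integral_eq_lintegral_ofReal (.fintype_prod hint)
      (.of_forall fun z => Finset.prod_nonneg fun i _ => complexGaussianPDF_nonneg _),
    integral_fintype_prod_eq_prod,
    ENNReal.ofReal_prod_of_nonneg fun i _ => integral_nonneg complexGaussianPDF_nonneg]
  simp only [hbox]

lemma integrable_norm_sq_complexGaussianPi (i : ι) :
    Integrable (fun z : ι → ℂ => ‖z i‖ ^ 2) (complexGaussianPi ι) :=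
  integrable_comp_eval (μ := fun _ => complexGaussian) (f := fun z : ℂ => ‖z‖ ^ 2)
    (.of_integral_ne_zero (by rw [integral_norm_sq_complexGaussian]; exact one_ne_zero))

lemma integral_norm_sq_complexGaussianPi (i : ι) :
    ∫ z, ‖z i‖ ^ 2 ∂complexGaussianPi ι = 1 := by
  rw [← integral_norm_sq_complexGaussian]
  exact integral_comp_eval (μ := fun _ => complexGaussian) (f := fun z : ℂ => ‖z‖ ^ 2)
    (Continuous.aestronglyMeasurable (by fun_prop))

lemma complexGaussianPi_real_lt_norm_sq {t : ℝ} (ht : 0 ≤ t) :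
    (complexGaussianPi ι).real {z | t < ‖z‖ ^ 2} =
      1 - (1 - Real.exp (-t)) ^ Fintype.card ι := by
  have hcompl : {z : ι → ℂ | t < ‖z‖ ^ 2} = (univ.pi fun _ => Metric.closedBall 0 √t)ᶜ := by
    ext z
    rw [mem_compl_iff, mem_univ_pi, mem_ofPred_eq, ← Real.sqrt_lt ht (norm_nonneg z), ← not_le,
      pi_norm_le_iff_of_nonneg (Real.sqrt_nonneg t)]
    simp only [mem_closedBall_zero_iff]
  rw [hcompl,
    probReal_compl_eq_one_sub (.univ_pi fun _ => Metric.isClosed_closedBall.measurableSet),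
    complexGaussianPi, measureReal_def, Measure.pi_pi]
  simp [← measureReal_def, complexGaussian_real_closedBall, Real.sq_sqrt ht]

lemma hasDerivAt_one_sub_exp_neg_pow_div (k : ℕ) (t : ℝ) :
    HasDerivAt (fun t => (1 - Real.exp (-t)) ^ (k + 1) / (k + 1))
      (Real.exp (-t) * (1 - Real.exp (-t)) ^ k) t := by
  refine ((((hasDerivAt_neg t).exp.const_sub 1).fun_pow (k + 1)).div_const _).congr_deriv ?_
  push_cast
  field_simp

lemma tendsto_one_sub_exp_neg_pow_div (k : ℕ) :
    Tendsto (fun t : ℝ => (1 - Real.exp (-t)) ^ (k + 1) / (k + 1)) atTop (𝓝 (1 / (k + 1))) := by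
  have h := ((Real.tendsto_exp_neg_atTop_nhds_zero.const_sub 1).pow (k + 1)).div_const (k + 1 : ℝ)
  simpa using h

lemma exp_neg_mul_one_sub_exp_neg_pow_nonneg (k : ℕ) {t : ℝ} (ht : 0 ≤ t) :
    0 ≤ Real.exp (-t) * (1 - Real.exp (-t)) ^ k := by
  have : Real.exp (-t) ≤ 1 := Real.exp_le_one_iff.2 (by linarith)
  have : 0 ≤ 1 - Real.exp (-t) := by linarith
  positivity

lemma integral_Ioi_one_sub_one_sub_exp_neg_pow (n : ℕ) :
    ∫ t in Ioi (0 : ℝ), (1 - (1 - Real.exp (-t)) ^ n) = harmonic n := by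
  have hgeom (t : ℝ) : 1 - (1 - Real.exp (-t)) ^ n =
      ∑ k ∈ Finset.range n, Real.exp (-t) * (1 - Real.exp (-t)) ^ k := by
    rw [← mul_neg_geom_sum, sub_sub_cancel, Finset.mul_sum]
  simp only [hgeom]
  rw [integral_finsetSum _ fun k _ => integrableOn_Ioi_deriv_of_nonneg'
    (fun t _ => hasDerivAt_one_sub_exp_neg_pow_div k t)
    (fun t ht => exp_neg_mul_one_sub_exp_neg_pow_nonneg k ht.le)
    (tendsto_one_sub_exp_neg_pow_div k), harmonic, Rat.cast_sum]
  refine Finset.sum_congr rfl fun k _ => ?_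
  rw [integral_Ioi_of_hasDerivAt_of_nonneg' (fun t _ => hasDerivAt_one_sub_exp_neg_pow_div k t)
    (fun t ht => exp_neg_mul_one_sub_exp_neg_pow_nonneg k ht.le)
    (tendsto_one_sub_exp_neg_pow_div k)]
  simp

lemma norm_sq_le_sum_norm_sq (z : ι → ℂ) : ‖z‖ ^ 2 ≤ ∑ i, ‖z i‖ ^ 2 := by
  rw [← Real.le_sqrt (norm_nonneg z) (by positivity), pi_norm_le_iff_of_nonneg (Real.sqrt_nonneg _)]
  exact fun i => Real.le_sqrt_of_sq_le
    (Finset.single_le_sum (f := fun i => ‖z i‖ ^ 2) (fun _ _ => by positivity) (Finset.mem_univ i))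

-- `‖z‖` is the supremum norm of `ι → ℂ`, so this is the mean of the largest `|zᵢ|²`.
lemma integral_sup_norm_sq_complexGaussianPi :
    ∫ z, ‖z‖ ^ 2 ∂complexGaussianPi ι = harmonic (Fintype.card ι) := by
  have hint : Integrable (fun z : ι → ℂ => ‖z‖ ^ 2) (complexGaussianPi ι) := by
    refine (integrable_finsetSum Finset.univ fun i _ =>
      integrable_norm_sq_complexGaussianPi i).mono' (by fun_prop) (.of_forall fun z => ?_)
    rw [Real.norm_of_nonneg (by positivity)]
    exact norm_sq_le_sum_norm_sq z
  rw [hint.integral_eq_integral_meas_lt (.of_forall fun z => by positivity),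
    setIntegral_congr_fun measurableSet_Ioi fun t ht => complexGaussianPi_real_lt_norm_sq ht.le,
    integral_Ioi_one_sub_one_sub_exp_neg_pow]

lemma star_dotProduct_self_eq_sum_norm_sq (z : ι → ℂ) :
    star z ⬝ᵥ z = ((∑ i, ‖z i‖ ^ 2 : ℝ) : ℂ) := by
  simp [dotProduct, Complex.conj_mul']

variable [DecidableEq ι] {U : Matrix ι ι ℂ}

lemma sum_norm_sq_mulVec (hU : Uᴴ * U = 1) (z : ι → ℂ) :
    ∑ i, ‖(U *ᵥ z) i‖ ^ 2 = ∑ i, ‖z i‖ ^ 2 := by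
  rw [← Complex.ofReal_inj, ← star_dotProduct_self_eq_sum_norm_sq,
    ← star_dotProduct_self_eq_sum_norm_sq, star_mulVec, dotProduct_mulVec, vecMul_vecMul, hU,
    vecMul_one]

-- The Jacobian of `U` is constant, and it equals one because both measures have total mass one.
lemma measurePreserving_mulVec_complexGaussianPi (hU : Uᴴ * U = 1) :
    MeasurePreserving (U *ᵥ ·) (complexGaussianPi ι) (complexGaussianPi ι) := by
  let L : (ι → ℂ) →ₗ[ℝ] (ι → ℂ) := U.mulVecLin.restrictScalars ℝ
  have hdet : LinearMap.det L ≠ 0 := by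
    have hinv : (Uᴴ.mulVecLin.restrictScalars ℝ).comp L = LinearMap.id :=
      LinearMap.ext fun z => by simp [L, hU]
    refine right_ne_zero_of_mul (a := LinearMap.det (Uᴴ.mulVecLin.restrictScalars ℝ)) ?_
    rw [← LinearMap.det_comp, hinv, LinearMap.det_id]
    exact one_ne_zero
  have hL : Measurable L := L.continuous_of_finiteDimensional.measurable
  have hmap : Measure.map L (complexGaussianPi ι) =
      ENNReal.ofReal |(LinearMap.det L)⁻¹| • complexGaussianPi ι := by
    ext s hs
    rw [Measure.map_apply hL hs, Measure.smul_apply, complexGaussianPi_eq_withDensity,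
      withDensity_apply _ (hL hs), withDensity_apply _ hs, ← lintegral_smul_measure,
      ← Measure.restrict_smul, ← Measure.map_linearMap_addHaar_eq_smul_addHaar _ hdet,
      setLIntegral_map hs (by fun_prop) hL]
    simp only [L, LinearMap.coe_restrictScalars, mulVecLin_apply, sum_norm_sq_mulVec hU]
  have hone : ENNReal.ofReal |(LinearMap.det L)⁻¹| = 1 := by
    simpa [Measure.map_apply hL .univ] using (congrArg (· univ) hmap).symm
  exact ⟨hL, by rwa [hone, one_smul] at hmap⟩

end ComplexGaussian

section ArgmaxResponse

open MeasureTheory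

variable {ι : Type*} [Fintype ι]

/-- The indicator that `|wᵢ|` is maximal among the coordinates of `w`; here `‖w‖` is the supremum
norm of `ι → ℂ`. -/
noncomputable def argmaxIndicator (i : ι) (w : ι → ℂ) : ℝ := if ‖w i‖ = ‖w‖ then 1 else 0

/-- The response function that outputs the index of the largest coordinate of `w`, with ties split
evenly: the probability of the output `i`. -/
noncomputable def argmaxWeight (i : ι) (w : ι → ℂ) : ℝ :=
  argmaxIndicator i w / ∑ k, argmaxIndicator k w

lemma argmaxIndicator_nonneg (i : ι) (w : ι → ℂ) : 0 ≤ argmaxIndicator i w := by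
  unfold argmaxIndicator; split_ifs <;> norm_num

lemma argmaxWeight_nonneg (i : ι) (w : ι → ℂ) : 0 ≤ argmaxWeight i w :=
  div_nonneg (argmaxIndicator_nonneg i w) (Finset.sum_nonneg fun k _ => argmaxIndicator_nonneg k w)

lemma argmaxWeight_le_one (i : ι) (w : ι → ℂ) : argmaxWeight i w ≤ 1 :=
  div_le_one_of_le₀ (Finset.single_le_sum (fun k _ => argmaxIndicator_nonneg k w)
    (Finset.mem_univ i)) (Finset.sum_nonneg fun k _ => argmaxIndicator_nonneg k w)

lemma sum_argmaxWeight [Nonempty ι] (w : ι → ℂ) : ∑ i, argmaxWeight i w = 1 := by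
  obtain ⟨i, hi⟩ : ∃ i, ‖w i‖ = ‖w‖ := by
    obtain ⟨i, hi⟩ := Finite.exists_max fun i => ‖w i‖
    exact ⟨i, (norm_le_pi_norm w i).antisymm (pi_norm_le_iff_of_nonempty _ |>.2 hi)⟩
  have hpos : 0 < ∑ k, argmaxIndicator k w :=
    Finset.sum_pos' (fun k _ => argmaxIndicator_nonneg k w)
      ⟨i, Finset.mem_univ i, by simp [argmaxIndicator, hi]⟩
  simp only [argmaxWeight]
  rw [← Finset.sum_div, div_self hpos.ne']

@[fun_prop]
lemma measurable_argmaxWeight (i : ι) : Measurable (argmaxWeight i) := by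
  have hind (k : ι) : Measurable (argmaxIndicator (ι := ι) k) :=
    Measurable.ite (measurableSet_eq_fun (by fun_prop) (by fun_prop)) measurable_const
      measurable_const
  unfold argmaxWeight
  fun_prop

lemma argmaxWeight_perm (σ : Equiv.Perm ι) {w w' : ι → ℂ} (h : ∀ j, ‖w' (σ j)‖ = ‖w j‖) (i : ι) :
    argmaxWeight (σ i) w' = argmaxWeight i w := by
  have hnorm : ‖w'‖ = ‖w‖ := by
    refine le_antisymm ?_ ?_ <;> rw [pi_norm_le_iff_of_nonneg (norm_nonneg _)]
    · exact fun j => σ.apply_symm_apply j ▸ (h _).trans_le (norm_le_pi_norm w _)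
    · exact fun j => (h j).symm.trans_le (norm_le_pi_norm w' _)
  have hind (j : ι) : argmaxIndicator (σ j) w' = argmaxIndicator j w := by
    simp only [argmaxIndicator, hnorm, h]
  simp only [argmaxWeight]
  rw [← Equiv.sum_comp σ]
  simp only [hind]

lemma sum_argmaxWeight_mul_norm_sq [Nonempty ι] (w : ι → ℂ) :
    ∑ i, argmaxWeight i w * ‖w i‖ ^ 2 = ‖w‖ ^ 2 := by
  have hmax (i : ι) : argmaxWeight i w * ‖w i‖ ^ 2 = argmaxWeight i w * ‖w‖ ^ 2 := by
    by_cases h : ‖w i‖ = ‖w‖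
    · rw [h]
    · simp only [argmaxWeight, argmaxIndicator, if_neg h, zero_div, zero_mul]
  simp only [hmax]
  rw [← Finset.sum_mul, sum_argmaxWeight, one_mul]

lemma integrable_argmaxWeight_mul (i j k : ι) :
    Integrable (fun w : ι → ℂ => (argmaxWeight i w : ℂ) * (w j * star (w k)))
      (complexGaussianPi ι) := by
  refine ((integrable_norm_sq_complexGaussianPi j).add
    (integrable_norm_sq_complexGaussianPi k)).mono'
      (Measurable.aestronglyMeasurable (by fun_prop)) (.of_forall fun w => ?_)
  rw [norm_mul, norm_mul, norm_star, Complex.norm_real,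
    Real.norm_of_nonneg (argmaxWeight_nonneg i w)]
  calc argmaxWeight i w * (‖w j‖ * ‖w k‖) ≤ 1 * (‖w j‖ * ‖w k‖) := by
        gcongr; exact argmaxWeight_le_one i w
    _ ≤ ‖w j‖ ^ 2 + ‖w k‖ ^ 2 := by
        nlinarith [sq_nonneg (‖w j‖ - ‖w k‖), sq_nonneg (‖w j‖), sq_nonneg (‖w k‖)]

/-- The second-moment matrix `𝔼 [rᵢ(w) w w†]` of a standard complex Gaussian vector `w`, where `rᵢ`
is the weight `argmaxWeight i`. -/
noncomputable def argmaxMoment (i : ι) : Matrix ι ι ℂ :=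
  of fun j k => ∫ w, (argmaxWeight i w : ℂ) * (w j * star (w k)) ∂complexGaussianPi ι

lemma sum_argmaxMoment_apply_self (j : ι) : ∑ i, argmaxMoment i j j = 1 := by
  have : Nonempty ι := ⟨j⟩
  simp only [argmaxMoment, of_apply]
  rw [← integral_finsetSum _ fun i _ => integrable_argmaxWeight_mul i j j]
  simp only [← Finset.sum_mul, ← Complex.ofReal_sum, sum_argmaxWeight, Complex.ofReal_one, one_mul,
    Complex.star_def, Complex.mul_conj', ← Complex.ofReal_pow]
  rw [integral_complex_ofReal, integral_norm_sq_complexGaussianPi, Complex.ofReal_one]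

lemma sum_argmaxMoment_apply_same [Nonempty ι] :
    ∑ i : ι, argmaxMoment i i i = harmonic (Fintype.card ι) := by
  simp only [argmaxMoment, of_apply]
  rw [← integral_finsetSum _ fun i _ => integrable_argmaxWeight_mul i i i]
  have hsum (w : ι → ℂ) : ∑ i, (argmaxWeight i w : ℂ) * (w i * star (w i)) =
      ((‖w‖ ^ 2 : ℝ) : ℂ) := by
    rw [← sum_argmaxWeight_mul_norm_sq]
    simp [Complex.mul_conj']
  simp only [hsum]
  rw [integral_complex_ofReal, integral_sup_norm_sq_complexGaussianPi, Complex.ofReal_ratCast]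

lemma argmaxWeight_mul_star_dotProduct_mulVec (i : ι) (G : Matrix ι ι ℂ) (w : ι → ℂ) :
    (argmaxWeight i w : ℂ) * (star w ⬝ᵥ G *ᵥ w) =
      ∑ j, ∑ k, G j k * ((argmaxWeight i w : ℂ) * (w k * star (w j))) := by
  simp only [dotProduct, mulVec, Finset.mul_sum, Pi.star_apply]
  exact Finset.sum_congr rfl fun j _ => Finset.sum_congr rfl fun k _ => by ring

lemma integrable_argmaxWeight_mul_star_dotProduct_mulVec (i : ι) (G : Matrix ι ι ℂ) :
    Integrable (fun w : ι → ℂ => (argmaxWeight i w : ℂ) * (star w ⬝ᵥ G *ᵥ w))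
      (complexGaussianPi ι) := by
  simp only [argmaxWeight_mul_star_dotProduct_mulVec]
  exact integrable_finsetSum _ fun j _ => integrable_finsetSum _ fun k _ =>
    (integrable_argmaxWeight_mul i k j).const_mul _

lemma integral_argmaxWeight_mul_star_dotProduct_mulVec (i : ι) (G : Matrix ι ι ℂ) :
    ∫ w, (argmaxWeight i w : ℂ) * (star w ⬝ᵥ G *ᵥ w) ∂complexGaussianPi ι =
      (G * argmaxMoment i).trace := by
  have hint (j k : ι) := (integrable_argmaxWeight_mul i k j).const_mul (G j k)
  simp only [argmaxWeight_mul_star_dotProduct_mulVec]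
  rw [integral_finsetSum _ fun j _ => integrable_finsetSum _ fun k _ => hint j k]
  simp only [integral_finsetSum _ fun k _ => hint _ k, integral_const_mul]
  rfl

lemma measurable_star_dotProduct_mulVec (G : Matrix ι ι ℂ) :
    Measurable fun w : ι → ℂ => star w ⬝ᵥ G *ᵥ w := by
  refine Continuous.measurable ?_
  fun_prop

lemma sum_argmaxWeight_mul_star_dotProduct_mulVec [Nonempty ι] (G : Matrix ι ι ℂ) (w : ι → ℂ) :
    ∑ i, (argmaxWeight i w : ℂ) * (star w ⬝ᵥ G *ᵥ w) = star w ⬝ᵥ G *ᵥ w := by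
  rw [← Finset.sum_mul, ← Complex.ofReal_sum, sum_argmaxWeight, Complex.ofReal_one, one_mul]

lemma integrable_star_dotProduct_mulVec_complexGaussianPi [Nonempty ι] (G : Matrix ι ι ℂ) :
    Integrable (fun z : ι → ℂ => star z ⬝ᵥ G *ᵥ z) (complexGaussianPi ι) := by
  simpa only [sum_argmaxWeight_mul_star_dotProduct_mulVec] using
    integrable_finsetSum Finset.univ fun i _ =>
      integrable_argmaxWeight_mul_star_dotProduct_mulVec i G

lemma integral_comp_mulVec_complexGaussianPi [DecidableEq ι] {U : Matrix ι ι ℂ} (hU : Uᴴ * U = 1)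
    {f : (ι → ℂ) → ℂ} (hf : Measurable f) :
    ∫ z, f (U *ᵥ z) ∂complexGaussianPi ι = ∫ z, f z ∂complexGaussianPi ι := by
  have h := measurePreserving_mulVec_complexGaussianPi hU
  conv_rhs => rw [← h.map_eq]
  rw [integral_map h.measurable.aemeasurable hf.aestronglyMeasurable]

-- The law of `w` is invariant under flipping the sign of the `j`-th coordinate.
lemma argmaxMoment_apply_of_ne (i : ι) {j k : ι} (hjk : j ≠ k) : argmaxMoment i j k = 0 := by
  classical
  let s : ι → ℂ := fun l => if l = j then -1 else 1
  have hs : (diagonal s)ᴴ * diagonal s = 1 := by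
    rw [diagonal_conjTranspose, diagonal_mul_diagonal, ← diagonal_one]
    congr 1
    ext l
    by_cases hl : l = j <;> simp [s, hl]
  have hweight (z : ι → ℂ) : argmaxWeight i (diagonal s *ᵥ z) = argmaxWeight i z := by
    refine argmaxWeight_perm 1 (fun l => ?_) i
    by_cases hl : l = j <;> simp [mulVec_diagonal, s, hl]
  have hinv := integral_comp_mulVec_complexGaussianPi hs
    (f := fun w => (argmaxWeight i w : ℂ) * (w j * star (w k))) (by fun_prop)
  have hneg (z : ι → ℂ) : (argmaxWeight i (diagonal s *ᵥ z) : ℂ) *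
      ((diagonal s *ᵥ z) j * star ((diagonal s *ᵥ z) k)) =
        -((argmaxWeight i z : ℂ) * (z j * star (z k))) := by
    rw [hweight]
    simp [mulVec_diagonal, s, hjk.symm]
  simp only [hneg, integral_neg] at hinv
  exact self_eq_neg.1 hinv.symm

lemma argmaxMoment_perm (σ : Equiv.Perm ι) (i j k : ι) :
    argmaxMoment (σ i) (σ j) (σ k) = argmaxMoment i j k := by
  classical
  let T : Matrix ι ι ℂ := (1 : Matrix ι ι ℂ).submatrix σ id
  have hT : Tᴴ * T = 1 := by
    rw [conjTranspose_submatrix, conjTranspose_one, submatrix_mul_equiv, one_mul, submatrix_id_id]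
  have happly (z : ι → ℂ) (l : ι) : (T *ᵥ z) l = z (σ l) := by
    simp [T, mulVec, dotProduct, one_apply]
  have hweight (z : ι → ℂ) : argmaxWeight i (T *ᵥ z) = argmaxWeight (σ i) z :=
    (argmaxWeight_perm σ (fun l => by rw [happly]) i).symm
  have hinv := integral_comp_mulVec_complexGaussianPi hT
    (f := fun w => (argmaxWeight i w : ℂ) * (w j * star (w k))) (by fun_prop)
  simp only [hweight, happly] at hinv
  exact hinv

lemma sum_argmaxMoment [DecidableEq ι] [Nonempty ι] : ∑ i : ι, argmaxMoment i = 1 := by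
  ext j k
  obtain rfl | hjk := eq_or_ne j k
  · simp only [Matrix.sum_apply, sum_argmaxMoment_apply_self, one_apply_eq]
  · simp only [Matrix.sum_apply, argmaxMoment_apply_of_ne _ hjk, Finset.sum_const_zero,
      one_apply_ne hjk]

lemma integral_star_dotProduct_mulVec_complexGaussianPi [Nonempty ι] (G : Matrix ι ι ℂ) :
    ∫ z, star z ⬝ᵥ G *ᵥ z ∂complexGaussianPi ι = G.trace := by
  classical
  calc ∫ z, star z ⬝ᵥ G *ᵥ z ∂complexGaussianPi ι
      = ∫ z, ∑ i, (argmaxWeight i z : ℂ) * (star z ⬝ᵥ G *ᵥ z) ∂complexGaussianPi ι := by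
        simp only [sum_argmaxWeight_mul_star_dotProduct_mulVec]
    _ = ∑ i, (G * argmaxMoment i).trace := by
        rw [integral_finsetSum _ fun i _ =>
          integrable_argmaxWeight_mul_star_dotProduct_mulVec i G]
        simp only [integral_argmaxWeight_mul_star_dotProduct_mulVec]
    _ = G.trace := by
        rw [← trace_sum, ← Matrix.mul_sum, sum_argmaxMoment, Matrix.mul_one]

/-- The largest visibility `(H_d - 1) / (d - 1)`, with `H_d` the `d`-th harmonic number, at which
the response `argmaxWeight` reproduces the correlations of the isotropic state under projective
measurements. At `d = 1` it takes the junk value `0 / 0 = 0`. -/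
noncomputable def argmaxVisibility (d : ℕ) : ℝ := (harmonic d - 1) / (d - 1)

lemma sub_one_mul_argmaxVisibility {d : ℕ} (hd : d ≠ 0) :
    ((d : ℝ) - 1) * argmaxVisibility d = harmonic d - 1 := by
  obtain rfl | hd1 := eq_or_ne d 1
  · simp [harmonic]
  · have : (d : ℝ) - 1 ≠ 0 := sub_ne_zero.2 (mod_cast hd1)
    rw [argmaxVisibility, mul_div_cancel₀ _ this]

lemma card_mul_argmaxMoment_same (i : ι) :
    Fintype.card ι * argmaxMoment i i i = harmonic (Fintype.card ι) := by
  classical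
  have : Nonempty ι := ⟨i⟩
  have hsymm (j : ι) : argmaxMoment j j j = argmaxMoment i i i := by
    simpa using argmaxMoment_perm (Equiv.swap i j) i i i
  rw [← sum_argmaxMoment_apply_same]
  simp only [hsymm, Finset.sum_const, Finset.card_univ, nsmul_eq_mul]

lemma argmaxMoment_same_add {i j : ι} (hij : i ≠ j) :
    argmaxMoment j j j + (Fintype.card ι - 1) * argmaxMoment i j j = 1 := by
  classical
  have : Nonempty ι := ⟨i⟩
  have hsymm (k : ι) (hk : k ≠ j) : argmaxMoment k j j = argmaxMoment i j j := by
    simpa [Equiv.swap_apply_of_ne_of_ne hij.symm hk.symm] using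
      argmaxMoment_perm (Equiv.swap i k) i j j
  have hsum := sum_argmaxMoment_apply_self j
  rwa [← Finset.add_sum_erase _ _ (Finset.mem_univ j),
    Finset.sum_congr rfl fun k hk => hsymm k (Finset.ne_of_mem_erase hk), Finset.sum_const,
    Finset.card_erase_of_mem (Finset.mem_univ j), Finset.card_univ, nsmul_eq_mul,
    Nat.cast_pred Fintype.card_pos] at hsum

variable [DecidableEq ι]

lemma argmaxMoment_eq (i : ι) :
    argmaxMoment i =
      (((1 - argmaxVisibility (Fintype.card ι)) / Fintype.card ι : ℝ) : ℂ) • 1 +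
        (argmaxVisibility (Fintype.card ι) : ℂ) • single i i 1 := by
  have : Nonempty ι := ⟨i⟩
  set d := Fintype.card ι
  have hd : (d : ℂ) ≠ 0 := by simp [d]
  have hvis : ((d : ℂ) - 1) * argmaxVisibility d = harmonic d - 1 := by
    exact_mod_cast congrArg Complex.ofReal
      (sub_one_mul_argmaxVisibility (d := d) Fintype.card_ne_zero)
  have hsame (j : ι) := card_mul_argmaxMoment_same j
  ext j k
  obtain hjk | rfl := ne_or_eq j k
  · have : ¬(i = j ∧ i = k) := fun h => hjk (h.1.symm.trans h.2)
    simp [argmaxMoment_apply_of_ne i hjk, one_apply_ne hjk, single_apply_of_ne, this]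
  obtain hij | rfl := ne_or_eq i j
  · have hd1 : (d : ℂ) - 1 ≠ 0 :=
      sub_ne_zero.2 (mod_cast (Fintype.one_lt_card_iff_nontrivial.2 ⟨i, j, hij⟩).ne')
    have hoff := argmaxMoment_same_add hij
    simp only [Matrix.add_apply, Matrix.smul_apply, one_apply_eq, single_apply_of_row_ne hij,
      smul_eq_mul, mul_one, mul_zero, add_zero]
    push_cast
    rw [eq_div_iff hd]
    refine mul_left_cancel₀ hd1 ?_
    linear_combination (d : ℂ) * hoff - hsame j + hvis
  · simp only [Matrix.add_apply, Matrix.smul_apply, one_apply_eq, single_apply_same,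
      smul_eq_mul, mul_one]
    push_cast
    rw [div_add' _ _ _ hd, eq_div_iff hd]
    linear_combination hsame i - hvis

lemma star_mulVec_dotProduct_conj_mulVec (G : Matrix ι ι ℂ) {U : Matrix ι ι ℂ} (hU : Uᴴ * U = 1)
    (z : ι → ℂ) : star (U *ᵥ z) ⬝ᵥ (U * G * Uᴴ) *ᵥ (U *ᵥ z) = star z ⬝ᵥ G *ᵥ z := by
  rw [star_mulVec, mulVec_mulVec, dotProduct_mulVec, vecMul_vecMul, Matrix.mul_assoc (U * G), hU,
    Matrix.mul_one, ← Matrix.mul_assoc, hU, Matrix.one_mul, dotProduct_mulVec]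

lemma integrable_argmaxWeight_mulVec_mul (i : ι) (G : Matrix ι ι ℂ) {U : Matrix ι ι ℂ}
    (hU : Uᴴ * U = 1) :
    Integrable (fun z : ι → ℂ => (argmaxWeight i (U *ᵥ z) : ℂ) * (star z ⬝ᵥ G *ᵥ z))
      (complexGaussianPi ι) := by
  have h := (measurePreserving_mulVec_complexGaussianPi hU).integrable_comp_of_integrable
    (integrable_argmaxWeight_mul_star_dotProduct_mulVec i (U * G * Uᴴ))
  simpa only [Function.comp_def, star_mulVec_dotProduct_conj_mulVec G hU] using h

lemma integral_argmaxWeight_mulVec_mul (i : ι) (G : Matrix ι ι ℂ) {U : Matrix ι ι ℂ}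
    (hU : Uᴴ * U = 1) :
    ∫ z, (argmaxWeight i (U *ᵥ z) : ℂ) * (star z ⬝ᵥ G *ᵥ z) ∂complexGaussianPi ι =
      (((1 - argmaxVisibility (Fintype.card ι)) / Fintype.card ι : ℝ) : ℂ) * G.trace +
        argmaxVisibility (Fintype.card ι) * (U * G * Uᴴ) i i := by
  have hinv := integral_comp_mulVec_complexGaussianPi hU
    (f := fun w => (argmaxWeight i w : ℂ) * (star w ⬝ᵥ (U * G * Uᴴ) *ᵥ w))
    ((by fun_prop : Measurable fun w : ι → ℂ => (argmaxWeight i w : ℂ)).mul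
      (measurable_star_dotProduct_mulVec _))
  have htrace : (U * G * Uᴴ).trace = G.trace := by
    rw [trace_mul_comm, ← Matrix.mul_assoc, hU, Matrix.one_mul]
  simp only [star_mulVec_dotProduct_conj_mulVec G hU] at hinv
  rw [hinv, integral_argmaxWeight_mul_star_dotProduct_mulVec, argmaxMoment_eq, Matrix.mul_add,
    trace_add, Matrix.mul_smul, Matrix.mul_smul, trace_smul, trace_smul, Matrix.mul_one, htrace,
    trace_mul_single]
  simp

end ArgmaxResponse

section BellLocal

open MeasureTheory

variable {X Y A B Ω : Type*} [Fintype A] [Fintype B]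

/-- A family of bipartite correlations `c a b x y = p(a, b | x, y)` is Bell-local if it arises from
a hidden variable with finitely many values and local response functions. The correlations are
complex-valued because they will be traces of complex matrices. -/
def IsBellLocal (c : A → B → X → Y → ℂ) : Prop :=
  ∃ (nΛ : ℕ) (q : Fin nΛ → ℝ) (P : A → X → Fin nΛ → ℝ) (Q : B → Y → Fin nΛ → ℝ),
    (∀ μ, 0 ≤ q μ) ∧ (∑ μ, q μ = 1) ∧
    (∀ a x μ, 0 ≤ P a x μ) ∧ (∀ x μ, ∑ a, P a x μ = 1) ∧
    (∀ b y μ, 0 ≤ Q b y μ) ∧ (∀ y μ, ∑ b, Q b y μ = 1) ∧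
    ∀ a b x y, c a b x y = ((∑ μ, q μ * P a x μ * Q b y μ : ℝ) : ℂ)

/-- A local response: for every input `x` and hidden variable `z`, a probability distribution
`R x · z` on the outputs, measurable in `z`. -/
structure IsLocalResponse [MeasurableSpace Ω] (R : X → A → Ω → ℝ) : Prop where
  nonneg : ∀ x a z, 0 ≤ R x a z
  sum_eq_one : ∀ x z, ∑ a, R x a z = 1
  measurable : ∀ x a, Measurable (R x a)

section StrategyWeight

variable [Fintype X]

/-- The probability that outputs drawn independently for all inputs `x` from `R x · z` are given by
the deterministic strategy `f`. -/
def strategyWeight (R : X → A → Ω → ℝ) (f : X → A) (z : Ω) : ℝ := ∏ x, R x (f x) z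

lemma sum_strategyWeight [DecidableEq X] {R : X → A → Ω → ℝ} {z : Ω} (hR : ∀ x, ∑ a, R x a z = 1) :
    ∑ f, strategyWeight R f z = 1 := by
  simp only [strategyWeight]
  rw [← Fintype.prod_sum fun x a => R x a z, Finset.prod_congr rfl fun x _ => hR x,
    Finset.prod_const_one]

lemma sum_strategyWeight_mul_ite [DecidableEq X] [DecidableEq A] {R : X → A → Ω → ℝ} {z : Ω}
    (hR : ∀ x, ∑ a, R x a z = 1) (x₀ : X) (a₀ : A) :
    ∑ f, strategyWeight R f z * (if f x₀ = a₀ then 1 else 0) = R x₀ a₀ z := by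
  have hprod (f : X → A) : strategyWeight R f z * (if f x₀ = a₀ then 1 else 0) =
      ∏ x, R x (f x) z * (if x = x₀ then if f x = a₀ then 1 else 0 else 1) := by
    rw [Finset.prod_mul_distrib, Fintype.prod_ite_eq' x₀ fun x => if f x = a₀ then 1 else 0,
      strategyWeight]
  simp only [hprod]
  rw [← Fintype.prod_sum fun x a => R x a z * (if x = x₀ then if a = a₀ then 1 else 0 else 1),
    Fintype.prod_eq_single x₀ fun x hx => by simp only [if_neg hx, mul_one, hR]]
  simp

variable [MeasurableSpace Ω] {R : X → A → Ω → ℝ}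

namespace IsLocalResponse

lemma strategyWeight_nonneg (hR : IsLocalResponse R) (f : X → A) (z : Ω) :
    0 ≤ strategyWeight R f z :=
  Finset.prod_nonneg fun x _ => hR.nonneg x (f x) z

lemma strategyWeight_le_one (hR : IsLocalResponse R) (f : X → A) (z : Ω) :
    strategyWeight R f z ≤ 1 :=
  Finset.prod_le_one (fun x _ => hR.nonneg x (f x) z) fun x _ => hR.sum_eq_one x z ▸
    Finset.single_le_sum (f := (R x · z)) (fun a _ => hR.nonneg x a z) (Finset.mem_univ (f x))

lemma measurable_strategyWeight (hR : IsLocalResponse R) (f : X → A) :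
    Measurable (strategyWeight R f) :=
  Finset.measurable_fun_prod _ fun x _ => hR.measurable x (f x)

lemma integrable_mul_strategyWeight {ν : Measure Ω} {W : Ω → ℝ} (hR : IsLocalResponse R)
    (hW : Integrable W ν) (f : X → A) : Integrable (fun z => W z * strategyWeight R f z) ν :=
  hW.mul_bdd (c := 1) (hR.measurable_strategyWeight f).aestronglyMeasurable <|
    .of_forall fun z => by
      rw [Real.norm_of_nonneg (hR.strategyWeight_nonneg f z)]
      exact hR.strategyWeight_le_one f z

end IsLocalResponse

end StrategyWeight

-- Fine's argument: a hidden variable may be replaced by the pair of deterministic strategies that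
-- it induces, and there are only finitely many of these.
theorem isBellLocal_integral [Finite X] [Finite Y] [MeasurableSpace Ω] {R : X → A → Ω → ℝ}
    {S : Y → B → Ω → ℝ} {ν : Measure Ω} {W : Ω → ℝ} (hW0 : ∀ z, 0 ≤ W z)
    (hWi : Integrable W ν) (hW1 : ∫ z, W z ∂ν = 1) (hR : IsLocalResponse R)
    (hS : IsLocalResponse S) :
    IsBellLocal fun a b x y => ((∫ z, W z * R x a z * S y b z ∂ν : ℝ) : ℂ) := by
  classical
  have := Fintype.ofFinite X
  have := Fintype.ofFinite Y
  let D (f : (X → A) × (Y → B)) (z : Ω) : ℝ := W z * strategyWeight R f.1 z * strategyWeight S f.2 z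
  have hD0 (f : (X → A) × (Y → B)) (z : Ω) : 0 ≤ D f z :=
    mul_nonneg (mul_nonneg (hW0 z) (hR.strategyWeight_nonneg _ z)) (hS.strategyWeight_nonneg _ z)
  have hDi (f : (X → A) × (Y → B)) : Integrable (D f) ν :=
    hS.integrable_mul_strategyWeight (hR.integrable_mul_strategyWeight hWi f.1) f.2
  have hD1 (z : Ω) : ∑ f, D f z = W z := by
    simp only [D, Fintype.sum_prod_type, ← Finset.mul_sum, sum_strategyWeight (hS.sum_eq_one · z),
      mul_one, sum_strategyWeight (hR.sum_eq_one · z)]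
  have hD2 (a : A) (b : B) (x : X) (y : Y) (z : Ω) :
      ∑ f, D f z * (if f.1 x = a then 1 else 0) * (if f.2 y = b then 1 else 0) =
        W z * R x a z * S y b z := by
    rw [← sum_strategyWeight_mul_ite (hR.sum_eq_one · z) x a,
      ← sum_strategyWeight_mul_ite (hS.sum_eq_one · z) y b, mul_assoc, Finset.sum_mul_sum,
      Finset.mul_sum, Fintype.sum_prod_type]
    simp only [D, Finset.mul_sum]
    exact Finset.sum_congr rfl fun f _ => Finset.sum_congr rfl fun g _ => by ring
  let e := Fintype.equivFin ((X → A) × (Y → B))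
  refine ⟨_, fun k => ∫ z, D (e.symm k) z ∂ν, fun a x k => if (e.symm k).1 x = a then 1 else 0,
    fun b y k => if (e.symm k).2 y = b then 1 else 0, fun k => integral_nonneg (hD0 _), ?_,
    fun a x k => ite_nonneg zero_le_one le_rfl, fun x k => by simp,
    fun b y k => ite_nonneg zero_le_one le_rfl, fun y k => by simp, fun a b x y => ?_⟩
  · rw [Equiv.sum_comp e.symm fun f => ∫ z, D f z ∂ν, ← integral_finsetSum _ fun f _ => hDi f]
    simp only [hD1, hW1]
  · rw [Equiv.sum_comp e.symm fun f => (∫ z, D f z ∂ν) * (if f.1 x = a then 1 else 0) *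
      (if f.2 y = b then 1 else 0)]
    simp only [← integral_mul_const]
    rw [← integral_finsetSum _ fun f _ => ((hDi f).mul_const _).mul_const _]
    simp only [hD2]

end BellLocal

section ProjectiveMeasurement

variable {n A : Type*} [Fintype n] [DecidableEq n] [Fintype A] {M : A → Matrix n n ℂ}

namespace IsProjMeasurement

lemma posSemidef (hM : IsProjMeasurement M) (a : A) : (M a).PosSemidef := by
  have h := posSemidef_conjTranspose_mul_self (M a)
  rwa [hM.1, hM.2.1] at h

lemma sum_eq_one (hM : IsProjMeasurement M) : ∑ a, M a = 1 := hM.2.2.2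

lemma mul_sum_smul (hM : IsProjMeasurement M) (c : A → ℂ) (a : A) :
    M a * ∑ b, c b • M b = c a • M a := by
  simp only [Matrix.mul_sum, Matrix.mul_smul]
  rw [Fintype.sum_eq_single a fun b hb => by rw [hM.2.2.1 a b hb.symm, smul_zero], hM.2.1]

lemma exists_mulVec_eq_ite_of_mulVec_eq_smul [DecidableEq A] (hM : IsProjMeasurement M)
    {c : A → ℂ} (hc : c.Injective) {μ : ℂ} {v : n → ℂ} (hv : v ≠ 0)
    (hcv : (∑ a, c a • M a) *ᵥ v = μ • v) :
    ∃ a, ∀ b, M b *ᵥ v = if a = b then v else 0 := by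
  have hsum : ∑ b, M b *ᵥ v = v := by rw [← sum_mulVec, hM.sum_eq_one, one_mulVec]
  have hann (b : A) (hb : M b *ᵥ v ≠ 0) : c b = μ := by
    have h : c b • (M b *ᵥ v) = μ • (M b *ᵥ v) := by
      rw [← smul_mulVec, ← hM.mul_sum_smul c b, ← mulVec_mulVec, hcv, mulVec_smul]
    exact smul_left_injective ℂ hb h
  obtain ⟨a, ha⟩ : ∃ a, M a *ᵥ v ≠ 0 := by
    by_contra! hzero
    exact hv (hsum ▸ Finset.sum_eq_zero fun a _ => hzero a)
  have hzero (b : A) (hb : b ≠ a) : M b *ᵥ v = 0 :=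
    by_contra fun h => hb (hc ((hann b h).trans (hann a ha).symm))
  refine ⟨a, fun b => ?_⟩
  obtain rfl | hab := eq_or_ne a b
  · rw [if_pos rfl, ← Fintype.sum_eq_single (f := fun b => M b *ᵥ v) a hzero, hsum]
  · rw [if_neg hab, hzero b hab.symm]

-- The eigenvectors of `∑ a, c a • M a`, with distinct real `c a`, diagonalise all `M a` at once.
lemma exists_unitary_conj_diagonal [DecidableEq A] (hM : IsProjMeasurement M) :
    ∃ U : Matrix n n ℂ, Uᴴ * U = 1 ∧ ∃ ℓ : n → A, ∀ a,
      M a = Uᴴ * diagonal (fun i => if ℓ i = a then 1 else 0) * U := by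
  obtain ⟨c, hc⟩ : ∃ c : A → ℝ, c.Injective :=
    ⟨fun a => (Fintype.equivFin A a : ℕ),
      Nat.cast_injective.comp (Fin.val_injective.comp (Fintype.equivFin A).injective)⟩
  have hH : (∑ a, (c a : ℂ) • M a).IsHermitian := by
    simp only [IsHermitian, conjTranspose_sum, conjTranspose_smul, hM.1, Complex.star_def,
      Complex.conj_ofReal]
  let V : Matrix n n ℂ := hH.eigenvectorUnitary
  have hVV : V * Vᴴ = 1 := mem_unitaryGroup_iff.1 hH.eigenvectorUnitary.2
  have hV0 (i : n) : V.col i ≠ 0 := fun h =>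
    hH.eigenvectorBasis.orthonormal.ne_zero i (WithLp.ofLp_injective 2 h)
  have hlabel (i : n) := hM.exists_mulVec_eq_ite_of_mulVec_eq_smul
    (Complex.ofReal_injective.comp hc) (μ := hH.eigenvalues i) (hV0 i)
    (hH.mulVec_eigenvectorBasis i)
  choose ℓ hℓ using hlabel
  have hMV (a : A) : M a * V = V * diagonal (fun i => if ℓ i = a then 1 else 0) := by
    ext j i
    rw [mul_diagonal]
    exact (congrFun (hℓ i a) j).trans (by split_ifs <;> simp)
  refine ⟨Vᴴ, by rwa [conjTranspose_conjTranspose], ℓ, fun a => ?_⟩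
  rw [conjTranspose_conjTranspose, ← hMV, Matrix.mul_assoc, hVV, Matrix.mul_one]

end IsProjMeasurement

end ProjectiveMeasurement

section LocalModel

open MeasureTheory

variable {ι : Type*} [Fintype ι]

/-- The probability of the effect `G` in the pure state along `z`, given by the Born rule. At the
junk vector `z = 0` the maximally mixed state is used instead, so that the probabilities of a
measurement always sum to one. -/
noncomputable def bornProb (G : Matrix ι ι ℂ) (z : ι → ℂ) : ℝ :=
  if z = 0 then G.trace.re / Fintype.card ι else (star z ⬝ᵥ G *ᵥ z).re / ∑ i, ‖z i‖ ^ 2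

lemma sum_norm_sq_eq_zero_iff {z : ι → ℂ} : ∑ i, ‖z i‖ ^ 2 = 0 ↔ z = 0 := by
  rw [← Complex.ofReal_eq_zero, ← star_dotProduct_self_eq_sum_norm_sq, dotProduct_star_self_eq_zero]

lemma sum_norm_sq_mul_bornProb {G : Matrix ι ι ℂ} (hG : G.PosSemidef) (z : ι → ℂ) :
    (((∑ i, ‖z i‖ ^ 2) * bornProb G z : ℝ) : ℂ) = star z ⬝ᵥ G *ᵥ z := by
  obtain rfl | hz := eq_or_ne z 0
  · simp
  · rw [bornProb, if_neg hz, mul_div_cancel₀ _ (sum_norm_sq_eq_zero_iff.not.2 hz)]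
    exact Complex.ext rfl (Complex.nonneg_iff.1 (hG.dotProduct_mulVec_nonneg z)).2

lemma isLocalResponse_bornProb [Nonempty ι] [DecidableEq ι] {Y B : Type*} [Fintype B]
    {G : Y → B → Matrix ι ι ℂ} (hG : ∀ y b, (G y b).PosSemidef) (hG1 : ∀ y, ∑ b, G y b = 1) :
    IsLocalResponse fun y b => bornProb (G y b) where
  nonneg y b z := by
    unfold bornProb
    split_ifs
    · exact div_nonneg (Complex.nonneg_iff.1 (hG y b).trace_nonneg).1 (Nat.cast_nonneg _)
    · exact div_nonneg (Complex.nonneg_iff.1 ((hG y b).dotProduct_mulVec_nonneg z)).1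
        (Finset.sum_nonneg fun i _ => sq_nonneg _)
  sum_eq_one y z := by
    obtain rfl | hz := eq_or_ne z 0
    · simp only [bornProb, if_true]
      rw [← Finset.sum_div, ← Complex.re_sum, ← trace_sum, hG1]
      simp
    · simp only [bornProb, if_neg hz]
      rw [← Finset.sum_div, ← Complex.re_sum, ← dotProduct_sum, ← sum_mulVec, hG1, one_mulVec,
        star_dotProduct_self_eq_sum_norm_sq, Complex.ofReal_re,
        div_self (sum_norm_sq_eq_zero_iff.not.2 hz)]
  measurable y b :=
    Measurable.ite (measurableSet_singleton 0) measurable_const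
      ((Complex.measurable_re.comp (measurable_star_dotProduct_mulVec _)).div (by fun_prop))

lemma integral_sum_norm_sq_complexGaussianPi :
    ∫ z, ∑ i, ‖z i‖ ^ 2 ∂complexGaussianPi ι = Fintype.card ι := by
  rw [integral_finsetSum _ fun i _ => integrable_norm_sq_complexGaussianPi i]
  simp [integral_norm_sq_complexGaussianPi]

/-- The response `argmaxWeight` mixed with the uniform distribution, with visibility `t`. -/
noncomputable def noisyArgmaxWeight (t : ℝ) (i : ι) (w : ι → ℂ) : ℝ :=
  t * argmaxWeight i w + (1 - t) / Fintype.card ι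

lemma isLocalResponse_noisyArgmaxWeight [Nonempty ι] {X A : Type*} [Fintype A] [DecidableEq A]
    {t : ℝ} (ht0 : 0 ≤ t) (ht1 : t ≤ 1) (U : X → Matrix ι ι ℂ) (ℓ : X → ι → A) :
    IsLocalResponse fun x a z => ∑ i with ℓ x i = a, noisyArgmaxWeight t i (U x *ᵥ z) where
  nonneg x a z := Finset.sum_nonneg fun i _ =>
    add_nonneg (mul_nonneg ht0 (argmaxWeight_nonneg i _))
      (div_nonneg (sub_nonneg.2 ht1) (Nat.cast_nonneg _))
  sum_eq_one x z := by
    rw [Finset.sum_fiberwise]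
    simp only [noisyArgmaxWeight]
    rw [Finset.sum_add_distrib, ← Finset.mul_sum, sum_argmaxWeight]
    simp [mul_div_cancel₀]
  measurable x a := by
    have hU : Measurable fun z : ι → ℂ => U x *ᵥ z := Continuous.measurable (by fun_prop)
    unfold noisyArgmaxWeight
    fun_prop

variable [DecidableEq ι]

lemma integrable_noisyArgmaxWeight_mulVec_mul (t : ℝ) (i : ι) (G : Matrix ι ι ℂ)
    {U : Matrix ι ι ℂ} (hU : Uᴴ * U = 1) :
    Integrable (fun z : ι → ℂ => (noisyArgmaxWeight t i (U *ᵥ z) : ℂ) * (star z ⬝ᵥ G *ᵥ z))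
      (complexGaussianPi ι) := by
  have : Nonempty ι := ⟨i⟩
  simp only [noisyArgmaxWeight, Complex.ofReal_add, Complex.ofReal_mul, add_mul, mul_assoc]
  exact ((integrable_argmaxWeight_mulVec_mul i G hU).const_mul _).add
    ((integrable_star_dotProduct_mulVec_complexGaussianPi G).const_mul _)

lemma integral_noisyArgmaxWeight_mulVec_mul (t : ℝ) (i : ι) (G : Matrix ι ι ℂ)
    {U : Matrix ι ι ℂ} (hU : Uᴴ * U = 1) :
    ∫ z, (noisyArgmaxWeight t i (U *ᵥ z) : ℂ) * (star z ⬝ᵥ G *ᵥ z) ∂complexGaussianPi ι =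
      (((1 - t * argmaxVisibility (Fintype.card ι)) / Fintype.card ι : ℝ) : ℂ) * G.trace +
        ((t * argmaxVisibility (Fintype.card ι) : ℝ) : ℂ) * (U * G * Uᴴ) i i := by
  have : Nonempty ι := ⟨i⟩
  simp only [noisyArgmaxWeight, Complex.ofReal_add, Complex.ofReal_mul, add_mul,
    mul_assoc (t : ℂ)]
  rw [integral_add ((integrable_argmaxWeight_mulVec_mul i G hU).const_mul _)
      ((integrable_star_dotProduct_mulVec_complexGaussianPi G).const_mul _), integral_const_mul,
    integral_const_mul, integral_argmaxWeight_mulVec_mul i G hU,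
    integral_star_dotProduct_mulVec_complexGaussianPi]
  push_cast
  ring

lemma integral_sum_noisyArgmaxWeight_mul_bornProb [Nonempty ι] (t : ℝ) (s : Finset ι)
    {G : Matrix ι ι ℂ} (hG : G.PosSemidef) {U : Matrix ι ι ℂ} (hU : Uᴴ * U = 1) :
    ((∫ z, (∑ i, ‖z i‖ ^ 2) / Fintype.card ι * (∑ i ∈ s, noisyArgmaxWeight t i (U *ᵥ z)) *
        bornProb G z ∂complexGaussianPi ι : ℝ) : ℂ) =
      ((t * argmaxVisibility (Fintype.card ι) / Fintype.card ι : ℝ) : ℂ) *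
          ∑ i ∈ s, (U * G * Uᴴ) i i +
        (((1 - t * argmaxVisibility (Fintype.card ι)) / Fintype.card ι ^ 2 : ℝ) : ℂ) *
          (s.card * G.trace) := by
  have hborn (z : ι → ℂ) : (((∑ i, ‖z i‖ ^ 2) / Fintype.card ι *
      (∑ i ∈ s, noisyArgmaxWeight t i (U *ᵥ z)) * bornProb G z : ℝ) : ℂ) =
        (Fintype.card ι : ℂ)⁻¹ *
          ∑ i ∈ s, (noisyArgmaxWeight t i (U *ᵥ z) : ℂ) * (star z ⬝ᵥ G *ᵥ z) := by
    rw [← Finset.sum_mul, ← sum_norm_sq_mul_bornProb hG]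
    push_cast
    ring
  rw [← integral_complex_ofReal]
  simp only [hborn]
  rw [integral_const_mul,
    integral_finsetSum _ fun i _ => integrable_noisyArgmaxWeight_mulVec_mul t i G hU]
  simp only [integral_noisyArgmaxWeight_mulVec_mul t _ G hU]
  rw [Finset.sum_add_distrib, Finset.sum_const, nsmul_eq_mul, ← Finset.mul_sum]
  push_cast
  ring

lemma trace_conj_diagonal_ite_mul {A : Type*} [DecidableEq A] (ℓ : ι → A) (a : A)
    (U G : Matrix ι ι ℂ) :
    (Uᴴ * diagonal (fun i => if ℓ i = a then 1 else 0) * U * G).trace =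
      ∑ i with ℓ i = a, (U * G * Uᴴ) i i := by
  rw [Matrix.mul_assoc, Matrix.mul_assoc, trace_mul_comm, Matrix.mul_assoc, Finset.sum_filter]
  simp only [trace, diag_apply, diagonal_mul, ite_mul, one_mul, zero_mul]

lemma trace_kronecker_mul_isoState_of_conj_diagonal {d : ℕ} {A : Type*} [DecidableEq A]
    {ℓ : Fin d → A} {a : A} {U E : Matrix (Fin d) (Fin d) ℂ} (hU : Uᴴ * U = 1)
    (hE : E = Uᴴ * diagonal (fun i => if ℓ i = a then 1 else 0) * U) (F : Matrix (Fin d) (Fin d) ℂ)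
    (p : ℝ) :
    ((E ⊗ₖ F) * isoState d p).trace =
      ((p / d : ℝ) : ℂ) * ∑ i with ℓ i = a, (U * Fᵀ * Uᴴ) i i +
        (((1 - p) / d ^ 2 : ℝ) : ℂ) * (Finset.card {i | ℓ i = a} * Fᵀ.trace) := by
  have htrace : E.trace = Finset.card {i | ℓ i = a} := by
    rw [hE, ← Matrix.mul_one (_ * U), trace_conj_diagonal_ite_mul, Matrix.mul_one,
      mul_eq_one_comm.1 hU]
    simp only [one_apply_eq, Finset.sum_const, nsmul_eq_mul, mul_one]
  have hprod : (F * Eᵀ).trace = ∑ i with ℓ i = a, (U * Fᵀ * Uᴴ) i i := by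
    rw [← trace_transpose, transpose_mul, transpose_transpose, hE, trace_conj_diagonal_ite_mul]
  rw [trace_kronecker_mul_isoState, hprod, htrace, trace_transpose]

theorem isBellLocal_isoState {d : ℕ} (hd : d ≠ 0) {p : ℝ} (hp0 : 0 ≤ p)
    (hp : p ≤ argmaxVisibility d) {X Y A B : Type*} [Finite X] [Finite Y] [Fintype A] [Fintype B]
    {M : X → A → Matrix (Fin d) (Fin d) ℂ} {N : Y → B → Matrix (Fin d) (Fin d) ℂ}
    (hM : ∀ x, IsProjMeasurement (M x)) (hN : ∀ y b, (N y b).PosSemidef)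
    (hN1 : ∀ y, ∑ b, N y b = 1) :
    IsBellLocal fun a b x y => ((M x a ⊗ₖ N y b) * isoState d p).trace := by
  classical
  have : NeZero d := ⟨hd⟩
  have hvis0 : 0 ≤ argmaxVisibility d := hp0.trans hp
  have hvis : p / argmaxVisibility d * argmaxVisibility d = p :=
    div_mul_cancel_of_imp fun h => le_antisymm (hp.trans_eq h) hp0
  choose U hU ℓ hℓ using fun x => (hM x).exists_unitary_conj_diagonal
  have hAlice := isLocalResponse_noisyArgmaxWeight (div_nonneg hp0 hvis0)
    (div_le_one_of_le₀ hp hvis0) U ℓ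
  have hBob := isLocalResponse_bornProb (G := fun y b => (N y b)ᵀ)
    (fun y b => (hN y b).transpose) fun y => by rw [← transpose_sum, hN1, transpose_one]
  have hmodel (a : A) (b : B) (x : X) (y : Y) :=
    integral_sum_noisyArgmaxWeight_mul_bornProb (p / argmaxVisibility d) {i | ℓ x i = a}
      (hN y b).transpose (hU x)
  simp only [Fintype.card_fin, hvis] at hmodel
  simp only [trace_kronecker_mul_isoState_of_conj_diagonal (hU _) (hℓ _ _), ← hmodel]
  refine isBellLocal_integral (fun z => by positivity)
    ((integrable_finsetSum _ fun i _ => integrable_norm_sq_complexGaussianPi i).div_const _) ?_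
    hAlice hBob
  rw [integral_div, integral_sum_norm_sq_complexGaussianPi, Fintype.card_fin,
    div_self (mod_cast hd)]

lemma le_argmaxVisibility_eight : 0.24 ≤ argmaxVisibility 8 := by
  norm_num [argmaxVisibility, harmonic, Finset.sum_range_succ]

end LocalModel

theorem nonlocal_state_schmidt_number_not_certifiable_projective_general
    (l : ℝ) (hl0 : 0 < l) (hl1 : l < 0.57) :
    schmidtNumber (rhoTilde l) = 3 ∧
    (∃ A₀ A₁ B₀ B₁ : Matrix (Fin 8) (Fin 8) ℂ,
      IsPMObservable A₀ ∧ IsPMObservable A₁ ∧ IsPMObservable B₀ ∧ IsPMObservable B₁ ∧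
      (2 : ℂ) < Matrix.trace
        (rhoTilde l * (A₀ ⊗ₖ B₀ + A₀ ⊗ₖ B₁ + A₁ ⊗ₖ B₀ - A₁ ⊗ₖ B₁))) ∧
    (∀ (X Y A B : Type*) [Finite X] [Finite Y] [Fintype A] [Fintype B]
      (M : X → A → Matrix (Fin 8) (Fin 8) ℂ) (N : Y → B → Matrix (Fin 8) (Fin 8) ℂ),
      (∀ x, IsProjMeasurement (M x)) → (∀ y b, (N y b).PosSemidef) → (∀ y, ∑ b, N y b = 1) →
      ∃ (nΛ : ℕ) (q : Fin nΛ → ℝ) (P : A → X → Fin nΛ → ℝ) (Q : B → Y → Fin nΛ → ℝ),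
        (∀ μ, 0 ≤ q μ) ∧ (∑ μ, q μ = 1) ∧
        (∀ a x μ, 0 ≤ P a x μ) ∧ (∀ x μ, ∑ a, P a x μ = 1) ∧
        (∀ b y μ, 0 ≤ Q b y μ) ∧ (∀ y μ, ∑ b, Q b y μ = 1) ∧
        (∀ a b x y,
          Matrix.trace ((M x a ⊗ₖ N y b) * rhoTilde l) =
            ((l * ∑ μ, q μ * P a x μ * Q b y μ : ℝ) : ℂ) +
            ((1 - l : ℝ) : ℂ) * (star phi2 ⬝ᵥ ((M x a ⊗ₖ N y b) *ᵥ phi2)))) := by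
  refine ⟨schmidtNumber_rhoTilde hl0 (by linarith), exists_chsh_violation_rhoTilde hl1,
    fun X Y A B _ _ _ _ M N hM hN hN1 => ?_⟩
  obtain ⟨nΛ, q, P, Q, hq0, hq1, hP0, hP1, hQ0, hQ1, hlocal⟩ :=
    isBellLocal_isoState (by norm_num) (by norm_num) le_argmaxVisibility_eight hM hN hN1
  refine ⟨nΛ, q, P, Q, hq0, hq1, hP0, hP1, hQ0, hQ1, fun a b x y => ?_⟩
  rw [trace_mul_rhoTilde, Complex.ofReal_mul, ← hlocal a b x y]

/-- Theorem 1: for `0 < λ < 0.312`, the state `ρ̃(λ)` has Schmidt number 3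
and is Bell-nonlocal under projective measurements (it violates CHSH), yet all of its
correlations under local projective measurements can be simulated using shared randomness
together with the Schmidt-rank-2 state `|φ₂⁺⟩`. -/
theorem nonlocal_state_schmidt_number_not_certifiable_projective
    (l : ℝ) (hl0 : 0 < l) (hl1 : l < 0.312) :
    schmidtNumber (rhoTilde l) = 3 ∧
    (∃ A₀ A₁ B₀ B₁ : Matrix (Fin 8) (Fin 8) ℂ,
      IsPMObservable A₀ ∧ IsPMObservable A₁ ∧ IsPMObservable B₀ ∧ IsPMObservable B₁ ∧
      (2 : ℂ) < Matrix.trace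
        (rhoTilde l * (A₀ ⊗ₖ B₀ + A₀ ⊗ₖ B₁ + A₁ ⊗ₖ B₀ - A₁ ⊗ₖ B₁))) ∧
    (∀ (X Y A B : Type) [Fintype X] [Fintype Y] [Fintype A] [Fintype B]
      (M : X → A → Matrix (Fin 8) (Fin 8) ℂ) (N : Y → B → Matrix (Fin 8) (Fin 8) ℂ),
      (∀ x, IsProjMeasurement (M x)) → (∀ y, IsProjMeasurement (N y)) →
      ∃ (nΛ : ℕ) (q : Fin nΛ → ℝ) (P : A → X → Fin nΛ → ℝ) (Q : B → Y → Fin nΛ → ℝ),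
        (∀ μ, 0 ≤ q μ) ∧ (∑ μ, q μ = 1) ∧
        (∀ a x μ, 0 ≤ P a x μ) ∧ (∀ x μ, ∑ a, P a x μ = 1) ∧
        (∀ b y μ, 0 ≤ Q b y μ) ∧ (∀ y μ, ∑ b, Q b y μ = 1) ∧
        (∀ a b x y,
          Matrix.trace ((M x a ⊗ₖ N y b) * rhoTilde l) =
            ((l * ∑ μ, q μ * P a x μ * Q b y μ : ℝ) : ℂ) +
            ((1 - l : ℝ) : ℂ) * (star phi2 ⬝ᵥ ((M x a ⊗ₖ N y b) *ᵥ phi2)))) := by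
  obtain ⟨hSN, hCHSH, hlocal⟩ :=
    nonlocal_state_schmidt_number_not_certifiable_projective_general l hl0 (by linarith)
  exact ⟨hSN, hCHSH, fun X Y A B _ _ _ _ M N hM hN => hlocal X Y A B M N hM
    (fun y => (hN y).posSemidef) fun y => (hN y).sum_eq_one⟩
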